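/- arXiv:1403.6539 — 2 statements merged into one kernel-verified Lean document; each statement's English description precedes it below -/
import Mathlib

section
/- Suppose K is algebraically closed, β ≠ 0, and φ ∈ K[t₁,…,tₙ] is not a constant. Then the Krull dimension (in the sense of Gabriel–Rentschler) of the down-up algebra A(α,β,φ) equals n+3. -/
open MvPolynomial

namespace DownUp

inductive Gen | u | d

variable {K : Type} [Field K] {n : ℕ}

/-- Free algebra over the polynomial base ring on generators u, d. -/
abbrev F (K : Type) [Field K] (n : ℕ) := FreeAlgebra (MvPolynomial (Fin n) K) Gen

noncomputable def uF : F K n := FreeAlgebra.ι _ Gen.u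
noncomputable def dF : F K n := FreeAlgebra.ι _ Gen.d

/-- The defining relations of the down-up algebra over K[t₁,…,tₙ]. -/
inductive Rel (α β : K) (φ : MvPolynomial (Fin n) K) : F K n → F K n → Prop
  | ddu : Rel α β φ (dF * dF * uF)
      (α • (dF * uF * dF) + β • (uF * dF * dF) + algebraMap _ _ φ * dF)
  | duu : Rel α β φ (dF * uF * uF)
      (α • (uF * dF * uF) + β • (uF * uF * dF) + uF * algebraMap _ _ φ)

/-- The down-up algebra A(α,β,φ) over K[t₁,…,tₙ]. -/
abbrev A (α β : K) (φ : MvPolynomial (Fin n) K) := RingQuot (Rel α β φ)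

noncomputable def U (α β : K) (φ : MvPolynomial (Fin n) K) : A α β φ :=
  RingQuot.mkAlgHom K _ uF
noncomputable def D (α β : K) (φ : MvPolynomial (Fin n) K) : A α β φ :=
  RingQuot.mkAlgHom K _ dF

/-- Image of the base polynomial ring in A. -/
noncomputable def T (α β : K) (φ : MvPolynomial (Fin n) K) :
    MvPolynomial (Fin n) K →ₐ[K] A α β φ :=
  (RingQuot.mkAlgHom K (Rel α β φ)).comp (IsScalarTower.toAlgHom K (MvPolynomial (Fin n) K) (F K n))

end DownUp
/-- `krullLE A' k M` says the Gabriel–Rentschler Krull dimension of the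
A'-module M is < k (i.e. ≤ k − 1): for k = 0 this means M = 0, and
κ(M) ≤ k means every descending chain of submodules has all but finitely many
successive factors of Krull dimension ≤ k − 1. -/
def krullLE (A' : Type) [Ring A'] :
    ℕ → (M : Type) → [AddCommGroup M] → [Module A' M] → Prop
  | 0, M, _, _ => Subsingleton M
  | k + 1, M, _, _ => ∀ f : ℕ → Submodule A' M, Antitone f →
      ∀ᶠ i in Filter.atTop,
        krullLE A' k (↥(f i) ⧸ Submodule.comap (f i).subtype (f (i + 1)))

namespace DownUpKrull

open Filter

/-- Deviation of the interval `[a, b]` of an ordered set is `< k`. -/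
def devLE {P : Type*} [Preorder P] : ℕ → P → P → Prop
  | 0, a, b => b ≤ a
  | k + 1, a, b => ∀ f : ℕ → P, Antitone f → (∀ i, a ≤ f i ∧ f i ≤ b) →
      ∀ᶠ i in atTop, devLE k (f (i + 1)) (f i)

theorem devLE_transfer {P Q : Type*} [Preorder P] [Preorder Q] (g : P → Q) (k : ℕ) :
    ∀ (a b : P) (a' b' : Q), a ≤ b → a' ≤ g a → g b ≤ b' →
      (∀ x y, a ≤ x → x ≤ y → y ≤ b → g x ≤ g y) →
      (∀ x y, a ≤ x → x ≤ y → y ≤ b → g y ≤ g x → y ≤ x) →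
      devLE k a' b' → devLE k a b := by
  induction k with
  | zero =>
    intro a b a' b' hab ha hb _ hr h
    exact hr a b le_rfl hab le_rfl (hb.trans (le_trans h ha))
  | succ k ih =>
    intro a b a' b' hab ha hb hm hr h f hf hfab
    have h1 := h (fun i => g (f i))
      (fun i j hij => hm _ _ (hfab j).1 (hf hij) (hfab i).2)
      (fun i => ⟨ha.trans (hm _ _ le_rfl (hfab i).1 (hfab i).2),
        (hm _ _ (hfab i).1 (hfab i).2 le_rfl).trans hb⟩)
    filter_upwards [h1] with i hi
    refine ih _ _ _ _ (hf (Nat.le_succ i)) le_rfl le_rfl ?_ ?_ hi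
    · intro x y hx hxy hy
      exact hm _ _ ((hfab _).1.trans hx) hxy (hy.trans (hfab _).2)
    · intro x y hx hxy hy
      exact hr _ _ ((hfab _).1.trans hx) hxy (hy.trans (hfab _).2)

theorem devLE_mono {P : Type*} [Preorder P] {k : ℕ} {a b a' b' : P} (hab : a ≤ b)
    (ha : a' ≤ a) (hb : b ≤ b') (h : devLE k a' b') : devLE k a b :=
  devLE_transfer id k a b a' b' hab ha hb (fun _ _ _ h _ => h) (fun _ _ _ _ _ h => h) h

theorem devLE_refl {P : Type*} [Preorder P] (k : ℕ) : ∀ {a b : P}, b ≤ a → devLE k a b := by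
  induction k with
  | zero => intro a b h; exact h
  | succ k ih =>
    intro a b h f _ hf
    exact Eventually.of_forall fun i => ih ((hf i).2.trans (h.trans (hf _).1))

theorem devLE_succ {P : Type*} [Preorder P] (k : ℕ) :
    ∀ {a b : P}, devLE k a b → devLE (k + 1) a b := by
  induction k with
  | zero =>
    intro a b h
    exact devLE_refl _ h
  | succ k ih =>
    intro a b h f hf hfab
    filter_upwards [h f hf hfab] with i hi using ih hi

theorem devLE_prod {P Q : Type*} [Preorder P] [Preorder Q] (k : ℕ) :
    ∀ (a b : P × Q), devLE k a.1 b.1 → devLE k a.2 b.2 → devLE k a b := by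
  induction k with
  | zero => intro a b h1 h2; exact ⟨h1, h2⟩
  | succ k ih =>
    intro a b h1 h2 f hf hfab
    filter_upwards [h1 (fun i => (f i).1) (fun i j h => (hf h).1)
        (fun i => ⟨(hfab i).1.1, (hfab i).2.1⟩),
      h2 (fun i => (f i).2) (fun i j h => (hf h).2)
        (fun i => ⟨(hfab i).1.2, (hfab i).2.2⟩)] with i hi1 hi2
    exact ih _ _ hi1 hi2

theorem devLE_pi {ι P : Type*} [Finite ι] [Preorder P] (k : ℕ) :
    ∀ (a b : ι → P), (∀ x, devLE k (a x) (b x)) → devLE k a b := by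
  induction k with
  | zero => intro a b h x; exact h x
  | succ k ih =>
    intro a b h f hf hfab
    have : ∀ᶠ i in atTop, ∀ x, devLE k (f (i + 1) x) (f i x) := by
      rw [eventually_all]
      intro x
      exact h x (fun i => f i x) (fun i j h => hf h x)
        (fun i => ⟨(hfab i).1 x, (hfab i).2 x⟩)
    filter_upwards [this] with i hi using ih _ _ hi

section seq
variable {L : Type*} [PartialOrder L] [WellFoundedGT L]

theorem seq_stab (a : ℕ →o L) : ∃ N, ∀ m, N ≤ m → a N = a m :=
  WellFoundedGT.monotone_chain_condition a

theorem wf_seq : WellFoundedGT (ℕ →o L) := by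
  rw [wellFoundedGT_iff_monotone_chain_condition]
  intro f
  obtain ⟨N, hN⟩ := seq_stab (⟨fun i => f i i, fun i j h =>
    ((f.monotone h) i).trans ((f j).monotone h)⟩ : ℕ →o L)
  have h1 : ∀ x : ℕ, ∃ M, ∀ m, M ≤ m → f M x = f m x := fun x =>
    seq_stab (⟨fun i => f i x, fun i j h => (f.monotone h) x⟩ : ℕ →o L)
  choose M hM using h1
  refine ⟨N + ∑ x ∈ Finset.range N, M x, fun m hm => ?_⟩
  ext x
  set T := N + ∑ x ∈ Finset.range N, M x
  have key : ∀ m, T ≤ m → ∀ x, N ≤ x → f m x = f N N := by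
    intro m hm x hx
    have hNm : N ≤ m := le_trans (Nat.le_add_right _ _) hm
    apply le_antisymm
    · have h2 := hN (max m x) (hNm.trans (le_max_left _ _))
      change f N N = f (max m x) (max m x) at h2
      rw [h2]
      exact ((f.monotone (le_max_left m x)) x).trans ((f _).monotone (le_max_right m x))
    · exact ((f.monotone hNm) N).trans ((f m).monotone hx)
  by_cases hx : N ≤ x
  · change f T x = f m x
    rw [key m hm x hx, key T le_rfl x hx]
  · have hMT : M x ≤ T := (Finset.single_le_sum (f := M) (fun _ _ => Nat.zero_le _)
      (Finset.mem_range.2 (not_le.1 hx))).trans (Nat.le_add_left _ _)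
    change f T x = f m x
    rw [← hM x T hMT, ← hM x m (hMT.trans hm)]

theorem devLE_seq (k : ℕ) : ∀ (a b : ℕ →o L), a ≤ b → (∀ n, devLE k (a n) (b n)) →
    devLE (k + 1) a b := by
  induction k with
  | zero =>
    intro a b _ h
    exact devLE_refl _ (fun n => h n)
  | succ k ih =>
    intro a b hab h f hf hfab
    choose N hN using fun i => seq_stab (f i)
    -- limits
    let l : ℕ → L := fun i => f i (N i)
    have hl : ∀ i m, N i ≤ m → f i m = l i := fun i m hm => (hN i m hm).symm
    have hlf : ∀ i m, f i m ≤ l i := fun i m => by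
      rw [← hl i (max m (N i)) (le_max_right _ _)]
      exact (f i).monotone (le_max_left _ _)
    have hlanti : Antitone l := by
      intro i j hij
      change f j (N j) ≤ l i
      exact ((hf hij) (N j)).trans (hlf i _)
    obtain ⟨Na, hNa⟩ := seq_stab a
    obtain ⟨Nb, hNb⟩ := seq_stab b
    have hev := h (max Na Nb) l hlanti (fun i => by
      constructor
      · have := hNa (max (max Na Nb) (N i)) ((le_max_left _ _).trans (le_max_left _ _))
        have h2 := hNa (max Na Nb) (le_max_left _ _)
        rw [← h2, this, ← hl i (max (max Na Nb) (N i)) (le_max_right _ _)]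
        exact (hfab i).1 _
      · have := hNb (max (max Na Nb) (N i)) ((le_max_right _ _).trans (le_max_left _ _))
        have h2 := hNb (max Na Nb) (le_max_right _ _)
        rw [← h2, this, ← hl i (max (max Na Nb) (N i)) (le_max_right _ _)]
        exact (hfab i).2 _)
    filter_upwards [hev] with i hi
    set T := max (N i) (N (i + 1)) with hT
    let g : (ℕ →o L) → (Fin T → L) × (ℕ →o L) := fun c =>
      (fun x => c x, ⟨fun n => c (n + T), fun p q hpq => c.monotone (by omega)⟩)
    refine devLE_transfer g (k + 1) _ _ (g (f (i + 1))) (g (f i)) (hf (Nat.le_succ i))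
      le_rfl le_rfl ?_ ?_ ?_
    · intro x y _ hxy _
      exact ⟨fun n => hxy n, fun n => hxy (n + T)⟩
    · intro x y _ _ _ hg n
      by_cases hn : n < T
      · exact hg.1 ⟨n, hn⟩
      · have := hg.2 (n - T)
        change y (n - T + T) ≤ x (n - T + T) at this
        rwa [Nat.sub_add_cancel (not_lt.1 hn)] at this
    · apply devLE_prod
      · apply devLE_pi
        intro x
        exact devLE_mono (hf (Nat.le_succ i) _) ((hfab _).1 _) ((hfab _).2 _) (h x)
      · apply ih
        · intro n
          exact hf (Nat.le_succ i) _
        · intro n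
          change devLE k (f (i + 1) (n + T)) (f i (n + T))
          rw [hl i _ (by omega), hl (i + 1) _ (by omega)]
          exact hi

end seq

theorem krullLE_iff (A' : Type) [Ring A'] (k : ℕ) : ∀ (M : Type) [AddCommGroup M] [Module A' M],
    krullLE A' k M ↔ devLE k (⊥ : Submodule A' M) ⊤ := by
  induction k with
  | zero =>
    intro M _ _
    change Subsingleton M ↔ (⊤ : Submodule A' M) ≤ ⊥
    rw [← Submodule.subsingleton_iff A', top_le_iff]
    exact (subsingleton_iff_bot_eq_top (α := Submodule A' M)).symm
  | succ k ih =>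
    intro M _ _
    change (∀ f : ℕ → Submodule A' M, Antitone f → ∀ᶠ i in Filter.atTop,
        krullLE A' k (↥(f i) ⧸ Submodule.comap (f i).subtype (f (i + 1)))) ↔
      (∀ f : ℕ → Submodule A' M, Antitone f → (∀ i, ⊥ ≤ f i ∧ f i ≤ ⊤) →
        ∀ᶠ i in atTop, devLE k (f (i + 1)) (f i))
    simp only [bot_le, le_top, and_self, implies_true, forall_const]
    refine forall_congr' fun f => forall_congr' fun hf => eventually_congr ?_
    refine Eventually.of_forall fun i => ?_
    rw [ih]
    have hle : f (i + 1) ≤ f i := hf (Nat.le_succ i)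
    generalize f (i + 1) = X at hle
    generalize f i = Y at hle
    constructor
    · refine devLE_transfer (fun Z : Submodule A' M =>
        (Z.comap Y.subtype).map (Submodule.mkQ (X.comap Y.subtype))) k X Y ⊥ ⊤ hle
        bot_le le_top ?_ ?_
      · intro x y _ hxy _
        exact Submodule.map_mono (Submodule.comap_mono hxy)
      · intro x y hx _ hy hg z hz
        have h1 : Submodule.mkQ (X.comap Y.subtype) ⟨z, hy hz⟩ ∈
          (x.comap Y.subtype).map (Submodule.mkQ (X.comap Y.subtype)) :=
          hg (Submodule.mem_map_of_mem (by simpa using hz))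
        obtain ⟨t, ht, hte⟩ := h1
        have h2 := (Submodule.Quotient.eq _).1 hte
        have h3 : (t : M) - z ∈ X := h2
        have : z = t - (t - z) := by abel
        rw [this]
        exact x.sub_mem ht (hx h3)
    · refine devLE_transfer (fun Z : Submodule A' (↥Y ⧸ Submodule.comap Y.subtype X) =>
        (Z.comap (Submodule.mkQ (X.comap Y.subtype))).map Y.subtype) k ⊥ ⊤ X Y bot_le ?_ ?_ ?_ ?_
      · intro x hx
        refine ⟨⟨x, hle hx⟩, ?_, rfl⟩
        simpa using hx
      · exact Submodule.map_subtype_le _ _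
      · intro x y _ hxy _
        exact Submodule.map_mono (Submodule.comap_mono hxy)
      · intro x y _ _ _ hg z hz
        obtain ⟨t, rfl⟩ := Submodule.mkQ_surjective _ z
        have h1 : (t : M) ∈ (x.comap (Submodule.mkQ (X.comap Y.subtype))).map Y.subtype :=
          hg ⟨t, hz, rfl⟩
        obtain ⟨s, hs, hst⟩ := h1
        have : s = t := Subtype.ext hst
        rw [← this]
        exact hs

end DownUpKrull
namespace DownUpKrull

theorem devLE_polynomial {R : Type*} [CommRing R] [IsNoetherianRing R] {k : ℕ}
    (h : devLE k (⊥ : Ideal R) ⊤) : devLE (k + 1) (⊥ : Ideal (Polynomial R)) ⊤ := by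
  let g : Ideal (Polynomial R) → (ℕ →o Ideal R) := fun I =>
    ⟨fun n => I.leadingCoeffNth n, fun _ _ h => I.leadingCoeffNth_mono h⟩
  refine devLE_transfer g (k + 1) ⊥ ⊤ (g ⊥) (g ⊤) bot_le le_rfl le_rfl ?_ ?_ ?_
  · intro x y _ hxy _ n r hr
    change r ∈ y.leadingCoeffNth n
    change r ∈ x.leadingCoeffNth n at hr
    rw [Ideal.mem_leadingCoeffNth] at hr ⊢
    obtain ⟨p, hp, h⟩ := hr
    exact ⟨p, hxy hp, h⟩
  · intro x y _ hxy _ hg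
    have key : ∀ n : ℕ, ∀ p ∈ y, p.degree < n → p ∈ x := by
      intro n
      induction n with
      | zero =>
        intro p _ hp
        have : p = 0 := by
          rw [← Polynomial.degree_eq_bot]
          simpa [Nat.WithBot.lt_zero_iff] using hp
        rw [this]; exact x.zero_mem
      | succ n ih =>
        intro p hpy hp
        have hp' : p.degree ≤ n := by
          by_cases h0 : p = 0
          · simp [h0]
          · rw [Polynomial.degree_eq_natDegree h0] at hp ⊢
            exact_mod_cast Nat.lt_succ_iff.1 (by exact_mod_cast hp)
        by_cases hlt : p.degree < n
        · exact ih p hpy hlt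
        have hdeg : p.degree = n := le_antisymm hp' (not_lt.1 hlt)
        have h1 : p.leadingCoeff ∈ x.leadingCoeffNth n :=
          hg n (show p.leadingCoeff ∈ y.leadingCoeffNth n from
            (Ideal.mem_leadingCoeffNth _ _ _).2 ⟨p, hpy, hp', rfl⟩)
        obtain ⟨q, hq, hqd, hql⟩ := (Ideal.mem_leadingCoeffNth _ _ _).1 h1
        have hp0 : p ≠ 0 := by
          rintro rfl; simp at hdeg
        have hq0 : q ≠ 0 := by
          rintro rfl
          exact hp0 (Polynomial.leadingCoeff_eq_zero.1 (by simpa using hql.symm))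
        set e := n - q.natDegree
        have hqn : q.natDegree ≤ n := Polynomial.natDegree_le_of_degree_le hqd
        have hnt : Nontrivial R := by
          refine ⟨⟨p.leadingCoeff, 0, by simpa using hp0⟩⟩
        have hdq : (q * Polynomial.X ^ e).degree = (n : WithBot ℕ) := by
          rw [Polynomial.degree_mul_X_pow, Polynomial.degree_eq_natDegree hq0]
          norm_cast
          omega
        have hqx : q * Polynomial.X ^ e ∈ x := x.mul_mem_right _ hq
        have hsub : p - q * Polynomial.X ^ e ∈ x := by
          apply ih
          · exact y.sub_mem hpy (hxy hqx)
          · rw [← hdeg]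
            apply Polynomial.degree_sub_lt_left
            · rw [hdeg, hdq]
            · exact hp0
            · rw [Polynomial.leadingCoeff_mul_X_pow, hql]
        have := x.add_mem hsub hqx
        simpa using this
    intro p hp
    refine key (p.natDegree + 1) p hp ?_
    exact lt_of_le_of_lt Polynomial.degree_le_natDegree (by exact_mod_cast Nat.lt_succ_self _)
  · apply devLE_seq
    · intro n r hr
      change r ∈ (⊤ : Ideal (Polynomial R)).leadingCoeffNth n
      change r ∈ (⊥ : Ideal (Polynomial R)).leadingCoeffNth n at hr
      rw [Ideal.mem_leadingCoeffNth] at hr ⊢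
      obtain ⟨p, _, h⟩ := hr
      exact ⟨p, trivial, h⟩
    · intro n
      refine devLE_mono ?_ bot_le le_top h
      intro r hr
      change r ∈ (⊤ : Ideal (Polynomial R)).leadingCoeffNth n
      change r ∈ (⊥ : Ideal (Polynomial R)).leadingCoeffNth n at hr
      rw [Ideal.mem_leadingCoeffNth] at hr ⊢
      obtain ⟨p, _, h⟩ := hr
      exact ⟨p, trivial, h⟩

theorem devLE_ringEquiv {R S : Type*} [CommRing R] [CommRing S] (e : R ≃+* S) {k : ℕ}
    (h : devLE k (⊥ : Ideal S) ⊤) : devLE k (⊥ : Ideal R) ⊤ := by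
  refine devLE_transfer (fun I : Ideal R => I.comap e.symm) k ⊥ ⊤ ⊥ ⊤ bot_le bot_le le_top ?_ ?_ h
  · intro x y _ hxy _
    exact Ideal.comap_mono hxy
  · intro x y _ _ _ hg r hr
    have : e r ∈ x.comap (e.symm : S ≃+* R) := hg (by simpa [Ideal.mem_comap] using hr)
    simpa [Ideal.mem_comap] using this

theorem devLE_field (K : Type*) [Field K] : devLE 1 (⊥ : Ideal K) ⊤ := by
  intro f hf _
  obtain ⟨N, hN⟩ := WellFoundedLT.antitone_chain_condition hf
  filter_upwards [Filter.eventually_ge_atTop N] with i hi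
  change f i ≤ f (i + 1)
  rw [← hN i hi, ← hN (i + 1) (by omega)]

theorem devLE_mvPolynomial (K : Type*) [Field K] (n : ℕ) :
    devLE (n + 1) (⊥ : Ideal (MvPolynomial (Fin n) K)) ⊤ := by
  induction n with
  | zero => exact devLE_ringEquiv (MvPolynomial.isEmptyRingEquiv K (Fin 0)) (devLE_field K)
  | succ n ih =>
    exact devLE_ringEquiv (MvPolynomial.finSuccEquiv K n).toRingEquiv (devLE_polynomial ih)

theorem exists_zero {K : Type*} [Field K] [IsAlgClosed K] {n : ℕ}
    (φ : MvPolynomial (Fin n) K) (hφ : ∀ c : K, φ ≠ MvPolynomial.C c) :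
    ∃ p : Fin n → K, MvPolynomial.eval p φ = 0 := by
  have hu : ¬ IsUnit φ := by
    intro h
    obtain ⟨r, _, hr⟩ := MvPolynomial.isUnit_iff_eq_C_of_isReduced.1 h
    exact hφ r hr
  obtain ⟨m, hm, hφm⟩ := exists_max_ideal_of_mem_nonunits hu
  obtain ⟨p, hp⟩ := MvPolynomial.isMaximal_iff_eq_vanishingIdeal_singleton.1 hm
  refine ⟨p, ?_⟩
  rw [hp, MvPolynomial.mem_vanishingIdeal_singleton_iff] at hφm
  simpa [MvPolynomial.aeval_eq_eval] using hφm

end DownUpKrull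
namespace DownUpKrull

section upper

variable {S A : Type*} [CommRing S] [Ring A] [Algebra S A]

theorem comm_left (W x : A) (a : Polynomial S)
    (h : W * x = x * Polynomial.aeval W a) (s : Polynomial S) :
    ∃ s' : Polynomial S, Polynomial.aeval W s * x = x * Polynomial.aeval W s' := by
  induction s using Polynomial.induction_on' with
  | add p q hp hq =>
    obtain ⟨p', hp⟩ := hp
    obtain ⟨q', hq⟩ := hq
    exact ⟨p' + q', by simp [add_mul, mul_add, hp, hq]⟩
  | monomial n c =>
    refine ⟨Polynomial.C c * a ^ n, ?_⟩
    have : W ^ n * x = x * (Polynomial.aeval W a) ^ n := by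
      induction n with
      | zero => simp
      | succ n ih => rw [pow_succ', mul_assoc, ih, ← mul_assoc, h, mul_assoc, ← pow_succ']
    rw [Polynomial.aeval_monomial, mul_assoc, this, map_mul, map_pow, Polynomial.aeval_C,
      ← mul_assoc, ← mul_assoc, Algebra.commutes]

theorem comm_right (W x : A) (a : Polynomial S)
    (h : x * W = Polynomial.aeval W a * x) (s : Polynomial S) :
    ∃ s' : Polynomial S, Polynomial.aeval W s' * x = x * Polynomial.aeval W s := by
  induction s using Polynomial.induction_on' with
  | add p q hp hq =>
    obtain ⟨p', hp⟩ := hp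
    obtain ⟨q', hq⟩ := hq
    exact ⟨p' + q', by simp [add_mul, mul_add, hp, hq]⟩
  | monomial n c =>
    refine ⟨Polynomial.C c * a ^ n, ?_⟩
    have : x * W ^ n = (Polynomial.aeval W a) ^ n * x := by
      induction n with
      | zero => simp
      | succ n ih => rw [pow_succ, ← mul_assoc, ih, mul_assoc, h, ← mul_assoc, ← pow_succ]
    rw [Polynomial.aeval_monomial, ← mul_assoc, ← Algebra.commutes, mul_assoc, this, map_mul,
      map_pow, Polynomial.aeval_C, mul_assoc]

/-- `x` commutes with the image of the polynomial ring, up to changing the polynomial. -/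
def Norm (W x : A) : Prop :=
  (∀ s : Polynomial S, ∃ s' : Polynomial S,
    Polynomial.aeval W s * x = x * Polynomial.aeval W s') ∧
  (∀ s : Polynomial S, ∃ s' : Polynomial S,
    Polynomial.aeval W s' * x = x * Polynomial.aeval W s)

theorem Norm.mul {W x y : A} (hx : Norm (S := S) W x) (hy : Norm (S := S) W y) :
    Norm (S := S) W (x * y) := by
  constructor
  · intro s
    obtain ⟨s1, h1⟩ := hx.1 s
    obtain ⟨s2, h2⟩ := hy.1 s1
    exact ⟨s2, by rw [← mul_assoc, h1, mul_assoc, h2, mul_assoc]⟩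
  · intro s
    obtain ⟨s1, h1⟩ := hy.2 s
    obtain ⟨s2, h2⟩ := hx.2 s1
    exact ⟨s2, by rw [← mul_assoc, h2, mul_assoc, h1, mul_assoc]⟩

theorem Norm.pow {W x : A} (hx : Norm (S := S) W x) (n : ℕ) : Norm (S := S) W (x ^ n) := by
  induction n with
  | zero => exact ⟨fun s => ⟨s, by simp⟩, fun s => ⟨s, by simp⟩⟩
  | succ n ih => rw [pow_succ]; exact ih.mul hx

/-- Additive span of the monomials `U^i D^j r(W)` with `(i, j) ∈ s`. -/
def Fil (S : Type*) [CommRing S] [Algebra S A] (U D W : A) (s : Set (ℕ × ℕ)) : AddSubgroup A :=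
  AddSubgroup.closure {x | ∃ i j, ∃ r : Polynomial S, (i, j) ∈ s ∧
    x = U ^ i * D ^ j * Polynomial.aeval W r}

/-- Pairs lexicographically smaller than `(i, j)`. -/
def lo (i j : ℕ) : Set (ℕ × ℕ) := {q | q.1 < i ∨ (q.1 = i ∧ q.2 < j)}

variable {U D W : A}

theorem Fil_mem {s : Set (ℕ × ℕ)} {i j : ℕ} (h : (i, j) ∈ s) (r : Polynomial S) :
    U ^ i * D ^ j * Polynomial.aeval W r ∈ Fil S U D W s :=
  AddSubgroup.subset_closure ⟨i, j, r, h, rfl⟩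

theorem Fil_mono {s t : Set (ℕ × ℕ)} (h : s ⊆ t) : Fil S U D W s ≤ Fil S U D W t :=
  AddSubgroup.closure_mono (by
    rintro x ⟨i, j, r, hs, rfl⟩
    exact ⟨i, j, r, h hs, rfl⟩)

theorem Fil_induct {s : Set (ℕ × ℕ)} (f : A →+ A) (T : AddSubgroup A)
    (h : ∀ i j, ∀ r : Polynomial S, (i, j) ∈ s → f (U ^ i * D ^ j * Polynomial.aeval W r) ∈ T)
    {x : A} (hx : x ∈ Fil S U D W s) : f x ∈ T := by
  have : Fil S U D W s ≤ T.comap f := by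
    refine (AddSubgroup.closure_le _).2 ?_
    rintro x ⟨i, j, r, hs, rfl⟩
    exact h i j r hs
  exact this hx

theorem Fil_U {s t : Set (ℕ × ℕ)} (h : ∀ i j, (i, j) ∈ s → (i + 1, j) ∈ t) {x : A}
    (hx : x ∈ Fil S U D W s) : U * x ∈ Fil S U D W t := by
  refine Fil_induct (AddMonoidHom.mulLeft U) _ ?_ hx
  intro i j r hs
  have := Fil_mem (U := U) (D := D) (W := W) (h i j hs) r
  simpa [pow_succ', mul_assoc] using this

theorem Fil_right {s : Set (ℕ × ℕ)} (p : Polynomial S) {x : A}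
    (hx : x ∈ Fil S U D W s) : x * Polynomial.aeval W p ∈ Fil S U D W s := by
  refine Fil_induct (AddMonoidHom.mulRight (Polynomial.aeval W p)) _ ?_ hx
  intro i j r hs
  have := Fil_mem (U := U) (D := D) (W := W) hs (r * p)
  simpa [mul_assoc] using this

theorem Fil_left (hU : Norm (S := S) W U) (hD : Norm (S := S) W D)
    {s : Set (ℕ × ℕ)} (p : Polynomial S) {x : A}
    (hx : x ∈ Fil S U D W s) : Polynomial.aeval W p * x ∈ Fil S U D W s := by
  refine Fil_induct (AddMonoidHom.mulLeft (Polynomial.aeval W p)) _ ?_ hx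
  intro i j r hs
  obtain ⟨p', hp'⟩ := ((hU.pow i).mul (hD.pow j)).1 p
  have := Fil_mem (U := U) (D := D) (W := W) hs (p' * r)
  rw [map_mul, ← mul_assoc, ← hp'] at this
  simpa [mul_assoc] using this

variable {lam mu φ : S}

theorem D_U_pow (hU : Norm (S := S) W U) (hDU : D * U = mu • (U * D) + W) (i : ℕ) :
    ∃ e : Polynomial S, D * U ^ (i + 1) =
      mu ^ (i + 1) • (U ^ (i + 1) * D) + U ^ i * Polynomial.aeval W e := by
  induction i with
  | zero => exact ⟨Polynomial.X, by simp [hDU]⟩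
  | succ i ih =>
    obtain ⟨e, he⟩ := ih
    obtain ⟨e', he'⟩ := hU.1 e
    refine ⟨Polynomial.C (mu ^ (i + 1)) * Polynomial.X + e', ?_⟩
    rw [pow_succ U (i + 1), ← mul_assoc, he, add_mul, smul_mul_assoc, mul_assoc, hDU, mul_assoc,
      he', mul_add, smul_add, mul_smul_comm, smul_smul, ← pow_succ, map_add, map_mul,
      Polynomial.aeval_C, Polynomial.aeval_X, mul_add, ← Algebra.smul_def, mul_smul_comm]
    simp only [pow_succ, mul_assoc, add_assoc]

theorem D_mon (hU : Norm (S := S) W U) (hD : Norm (S := S) W D)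
    (hDU : D * U = mu • (U * D) + W) (i j : ℕ) (r : Polynomial S) :
    D * (U ^ i * D ^ j * Polynomial.aeval W r) -
      U ^ i * D ^ (j + 1) * Polynomial.aeval W (Polynomial.C (mu ^ i) * r) ∈
      Fil S U D W {q | q.1 + 1 = i ∧ q.2 = j} := by
  cases i with
  | zero => 
    convert AddSubgroup.zero_mem _ using 1
    simp [pow_succ', mul_assoc]
  | succ i =>
    obtain ⟨e, he⟩ := D_U_pow hU hDU i
    obtain ⟨e', he'⟩ := (hD.pow j).1 e
    have : D * (U ^ (i + 1) * D ^ j * Polynomial.aeval W r) -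
      U ^ (i + 1) * D ^ (j + 1) * Polynomial.aeval W (Polynomial.C (mu ^ (i + 1)) * r) =
      U ^ i * D ^ j * Polynomial.aeval W (e' * r) := by
      rw [← mul_assoc, ← mul_assoc, he, map_mul, map_mul, Polynomial.aeval_C, ← Algebra.smul_def,
        add_mul, add_mul, mul_assoc (U ^ i) _ (D ^ j), he', smul_mul_assoc, smul_mul_assoc,
        mul_smul_comm, pow_succ' D]
      simp only [mul_assoc]
      abel
    rw [this]
    exact Fil_mem (by simp) _

theorem Fil_D (hU : Norm (S := S) W U) (hD : Norm (S := S) W D)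
    (hDU : D * U = mu • (U * D) + W) {s t : Set (ℕ × ℕ)}
    (h1 : ∀ i j, (i, j) ∈ s → (i, j + 1) ∈ t) (h2 : ∀ i j, (i + 1, j) ∈ s → (i, j) ∈ t) {x : A}
    (hx : x ∈ Fil S U D W s) : D * x ∈ Fil S U D W t := by
  refine Fil_induct (AddMonoidHom.mulLeft D) _ ?_ hx
  intro i j r hs
  have e1 := D_mon hU hD hDU i j r
  have e2 : _ ∈ Fil S U D W t := Fil_mono (by
    rintro ⟨k, l⟩ ⟨hk, hl⟩
    simp only at hk hl
    subst hk hl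
    exact h2 _ _ hs) e1
  have e3 := AddSubgroup.add_mem _ e2 (Fil_mem (U := U) (D := D) (W := W) (h1 _ _ hs)
    (Polynomial.C (mu ^ i) * r))
  simpa using e3

theorem Fil_top (hU : Norm (S := S) W U) (hD : Norm (S := S) W D)
    (hDU : D * U = mu • (U * D) + W) (hgen : Algebra.adjoin S {U, D} = ⊤) (x : A) :
    x ∈ Fil S U D W Set.univ := by
  have : ∀ a ∈ Algebra.adjoin S {U, D}, ∀ x ∈ Fil S U D W Set.univ,
      a * x ∈ Fil S U D W Set.univ := by
    intro a ha
    induction ha using Algebra.adjoin_induction with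
    | mem a ha =>
      intro x hx
      rcases ha with rfl | ha
      · exact Fil_U (fun _ _ _ => Set.mem_univ _) hx
      · rw [Set.mem_singleton_iff] at ha
        subst ha
        exact Fil_D hU hD hDU (fun _ _ _ => Set.mem_univ _) (fun _ _ _ => Set.mem_univ _) hx
    | algebraMap r =>
      intro x hx
      have := Fil_left hU hD (Polynomial.C r) hx
      simpa using this
    | add a b _ _ ha hb =>
      intro x hx
      rw [add_mul]
      exact AddSubgroup.add_mem _ (ha x hx) (hb x hx)
    | mul a b _ _ ha hb =>
      intro x hx
      rw [mul_assoc]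
      exact ha _ (hb x hx)
  have h1 : (1 : A) ∈ Fil S U D W Set.univ := by
    have := Fil_mem (U := U) (D := D) (W := W) (Set.mem_univ (0, 0)) (1 : Polynomial S)
    simpa using this
  have := this x (by rw [hgen]; trivial) 1 h1
  simpa using this

/-- Leading coefficient ideals. -/
def LC (hU : Norm (S := S) W U) (hD : Norm (S := S) W D) (I : Submodule A A) (i j : ℕ) :
    Ideal (Polynomial S) where
  carrier := {r | ∃ x ∈ I, x - U ^ i * D ^ j * Polynomial.aeval W r ∈ Fil S U D W (lo i j)}
  add_mem' := by
    rintro a b ⟨x, hx, hxa⟩ ⟨y, hy, hyb⟩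
    refine ⟨x + y, I.add_mem hx hy, ?_⟩
    have := AddSubgroup.add_mem _ hxa hyb
    rw [map_add, mul_add]
    convert this using 1
    abel
  zero_mem' := ⟨0, I.zero_mem, by simp⟩
  smul_mem' := by
    rintro c a ⟨x, hx, hxa⟩
    obtain ⟨c', hc'⟩ := ((hU.pow i).mul (hD.pow j)).2 c
    refine ⟨Polynomial.aeval W c' * x, I.smul_mem _ hx, ?_⟩
    have := Fil_left hU hD c' hxa
    rw [smul_eq_mul, map_mul, ← mul_assoc, ← hc']
    convert this using 1
    rw [mul_sub]
    simp only [mul_assoc]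

theorem LC_mono (hU : Norm (S := S) W U) (hD : Norm (S := S) W D) {I J : Submodule A A}
    (h : I ≤ J) (i j : ℕ) : LC hU hD I i j ≤ LC hU hD J i j := by
  rintro r ⟨x, hx, hr⟩
  exact ⟨x, h hx, hr⟩

theorem LC_i (hU : Norm (S := S) W U) (hD : Norm (S := S) W D) (I : Submodule A A) (i j : ℕ) :
    LC hU hD I i j ≤ LC hU hD I (i + 1) j := by
  rintro r ⟨x, hx, hr⟩
  refine ⟨U * x, I.smul_mem _ hx, ?_⟩
  have := Fil_U (t := lo (i + 1) j) (by
    rintro k l h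
    simp only [lo, Set.mem_ofPred_eq] at h ⊢
    omega) hr
  convert this using 1
  simp only [mul_sub, pow_succ', mul_assoc]

theorem LC_j (hU : Norm (S := S) W U) (hD : Norm (S := S) W D)
    (hDU : D * U = mu • (U * D) + W) (hmu : IsUnit mu) (I : Submodule A A) (i j : ℕ) :
    LC hU hD I i j ≤ LC hU hD I i (j + 1) := by
  rintro r ⟨x, hx, hr⟩
  have hu : IsUnit (Polynomial.C (mu ^ i)) := (hmu.pow i).map _
  rw [← Ideal.unit_mul_mem_iff_mem _ hu]
  refine ⟨D * x, I.smul_mem _ hx, ?_⟩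
  have h1 := Fil_D hU hD hDU (t := lo i (j + 1)) (by
    rintro k l h
    simp only [lo, Set.mem_ofPred_eq] at h ⊢
    omega) (by
    rintro k l h
    simp only [lo, Set.mem_ofPred_eq] at h ⊢
    omega) hr
  have h2 : _ ∈ Fil S U D W (lo i (j + 1)) := Fil_mono (by
    rintro ⟨k, l⟩ ⟨hk, hl⟩
    simp only [lo, Set.mem_ofPred_eq] at hk hl ⊢
    omega) (D_mon hU hD hDU i j r)
  convert AddSubgroup.add_mem _ h1 h2 using 1
  rw [mul_sub]
  abel

theorem LC_strict (hU : Norm (S := S) W U) (hD : Norm (S := S) W D)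
    (hDU : D * U = mu • (U * D) + W) (hgen : Algebra.adjoin S {U, D} = ⊤)
    {I J : Submodule A A} (hIJ : I ≤ J)
    (h : ∀ i j, LC hU hD J i j ≤ LC hU hD I i j) : J ≤ I := by
  have step : ∀ i j x, x ∈ Fil S U D W (lo i (j + 1)) →
      ∃ r : Polynomial S, x - U ^ i * D ^ j * Polynomial.aeval W r ∈ Fil S U D W (lo i j) := by
    intro i j x hx
    induction hx using AddSubgroup.closure_induction with
    | mem x hx =>
      obtain ⟨k, l, r, hs, rfl⟩ := hx
      by_cases hkl : (k, l) ∈ lo i j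
      · exact ⟨0, by simpa using Fil_mem hkl r⟩
      · have : k = i ∧ l = j := by
          simp only [lo, Set.mem_ofPred_eq] at hs hkl
          omega
        obtain ⟨rfl, rfl⟩ := this
        exact ⟨r, by simp⟩
    | zero => exact ⟨0, by simp⟩
    | add x y _ _ hx hy =>
      obtain ⟨r, hr⟩ := hx
      obtain ⟨s, hs⟩ := hy
      refine ⟨r + s, ?_⟩
      convert AddSubgroup.add_mem _ hr hs using 1
      rw [map_add, mul_add]
      abel
    | neg x _ hx =>
      obtain ⟨r, hr⟩ := hx
      refine ⟨-r, ?_⟩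
      convert AddSubgroup.neg_mem _ hr using 1
      rw [map_neg, mul_neg]
      abel
  have lim : ∀ i x, x ∈ Fil S U D W (lo (i + 1) 0) → ∃ j, x ∈ Fil S U D W (lo i j) := by
    intro i x hx
    induction hx using AddSubgroup.closure_induction with
    | mem x hx =>
      obtain ⟨k, l, r, hs, rfl⟩ := hx
      refine ⟨l + 1, Fil_mem ?_ r⟩
      simp only [lo, Set.mem_ofPred_eq] at hs ⊢
      omega
    | zero => exact ⟨0, AddSubgroup.zero_mem _⟩
    | add x y _ _ hx hy =>
      obtain ⟨r, hr⟩ := hx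
      obtain ⟨s, hs⟩ := hy
      refine ⟨r + s, AddSubgroup.add_mem _ (Fil_mono ?_ hr) (Fil_mono ?_ hs)⟩ <;>
      · rintro ⟨k, l⟩ hkl
        simp only [lo, Set.mem_ofPred_eq] at hkl ⊢
        omega
    | neg x _ hx =>
      obtain ⟨r, hr⟩ := hx
      exact ⟨r, AddSubgroup.neg_mem _ hr⟩
  have all : ∀ x, x ∈ Fil S U D W Set.univ → ∃ i, x ∈ Fil S U D W (lo i 0) := by
    intro x hx
    induction hx using AddSubgroup.closure_induction with
    | mem x hx =>
      obtain ⟨k, l, r, hs, rfl⟩ := hx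
      refine ⟨k + 1, Fil_mem ?_ r⟩
      simp only [lo, Set.mem_ofPred_eq]
      omega
    | zero => exact ⟨0, AddSubgroup.zero_mem _⟩
    | add x y _ _ hx hy =>
      obtain ⟨r, hr⟩ := hx
      obtain ⟨s, hs⟩ := hy
      refine ⟨r + s, AddSubgroup.add_mem _ (Fil_mono ?_ hr) (Fil_mono ?_ hs)⟩ <;>
      · rintro ⟨k, l⟩ hkl
        simp only [lo, Set.mem_ofPred_eq] at hkl ⊢
        omega
    | neg x _ hx =>
      obtain ⟨r, hr⟩ := hx
      exact ⟨r, AddSubgroup.neg_mem _ hr⟩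
  have main : ∀ i, ∀ x ∈ J, x ∈ Fil S U D W (lo i 0) → x ∈ I := by
    intro i
    induction i with
    | zero =>
      intro x _ hx
      have : x ∈ (⊥ : AddSubgroup A) := by
        refine (AddSubgroup.closure_le _).2 ?_ hx
        rintro x ⟨k, l, r, hs, rfl⟩
        simp only [lo, Set.mem_ofPred_eq] at hs
        omega
      rw [AddSubgroup.mem_bot] at this
      rw [this]
      exact I.zero_mem
    | succ i ih =>
      have main2 : ∀ j, ∀ x ∈ J, x ∈ Fil S U D W (lo i j) → x ∈ I := by
        intro j
        induction j with
        | zero => exact ih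
        | succ j ihj =>
          intro x hxJ hx
          obtain ⟨r, hr⟩ := step i j x hx
          obtain ⟨y, hyI, hy⟩ := h i j (show r ∈ LC hU hD J i j from ⟨x, hxJ, hr⟩)
          have h1 : x - y ∈ I := by
            refine ihj _ (J.sub_mem hxJ (hIJ hyI)) ?_
            convert AddSubgroup.sub_mem _ hr hy using 1
            abel
          have := I.add_mem h1 hyI
          simpa using this
      intro x hxJ hx
      obtain ⟨j, hj⟩ := lim i x hx
      exact main2 j x hxJ hj
  intro x hx
  obtain ⟨i, hi⟩ := all x (Fil_top hU hD hDU hgen x)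
  exact main i x hx hi

theorem upper_bound [IsNoetherianRing S] (hlam : IsUnit lam) (hmu : IsUnit mu)
    (hDU : D * U = mu • (U * D) + W)
    (hDW : D * W = lam • (W * D) + φ • D)
    (hWU : W * U = lam • (U * W) + φ • U)
    (hgen : Algebra.adjoin S {U, D} = ⊤) {k : ℕ}
    (hS : devLE k (⊥ : Ideal S) ⊤) : devLE (k + 3) (⊥ : Submodule A A) ⊤ := by
  obtain ⟨l, hl⟩ := hlam
  have hl1 : (↑l⁻¹ : S) * lam = 1 := by rw [← hl]; simp
  have hU : Norm (S := S) W U := by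
    constructor
    · refine comm_left W U (Polynomial.C lam * Polynomial.X + Polynomial.C φ) ?_
      rw [hWU]
      simp [mul_add, Algebra.smul_def, ← Algebra.commutes φ U]
      rw [← mul_assoc, ← mul_assoc, Algebra.commutes]
    · refine comm_right W U (Polynomial.C (↑l⁻¹ : S) * (Polynomial.X - Polynomial.C φ)) ?_
      simp only [map_mul, map_sub, Polynomial.aeval_C, Polynomial.aeval_X, mul_assoc, sub_mul]
      rw [hWU, ← Algebra.smul_def φ, add_sub_cancel_right, ← Algebra.smul_def, smul_smul, hl1,
        one_smul]
  have hD : Norm (S := S) W D := by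
    constructor
    · refine comm_left W D (Polynomial.C (↑l⁻¹ : S) * (Polynomial.X - Polynomial.C φ)) ?_
      simp only [map_mul, map_sub, Polynomial.aeval_C, Polynomial.aeval_X]
      rw [← mul_assoc, ← Algebra.commutes, mul_assoc, mul_sub, hDW, ← Algebra.commutes φ D,
        ← Algebra.smul_def φ, add_sub_cancel_right, ← Algebra.smul_def, smul_smul, hl1, one_smul]
    · refine comm_right W D (Polynomial.C lam * Polynomial.X + Polynomial.C φ) ?_
      rw [hDW]
      simp [add_mul, Algebra.smul_def, mul_assoc]
  have hR := devLE_polynomial hS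
  have : WellFoundedGT (ℕ →o Ideal (Polynomial S)) := wf_seq
  let g : Submodule A A → (ℕ →o (ℕ →o Ideal (Polynomial S))) := fun I =>
    ⟨fun i => ⟨fun j => LC hU hD I i j, monotone_nat_of_le_succ fun j => LC_j hU hD hDU hmu I i j⟩,
      monotone_nat_of_le_succ fun i j => LC_i hU hD I i j⟩
  refine devLE_transfer g (k + 3) ⊥ ⊤ (g ⊥) (g ⊤) bot_le le_rfl le_rfl ?_ ?_ ?_
  · intro x y _ hxy _ i j
    exact LC_mono hU hD hxy i j
  · intro x y _ hxy _ hg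
    exact LC_strict hU hD hDU hgen hxy (fun i j => hg i j)
  · apply devLE_seq
    · intro i j
      exact LC_mono hU hD bot_le i j
    · intro i
      apply devLE_seq
      · intro j
        exact LC_mono hU hD bot_le i j
      · intro j
        exact devLE_mono (LC_mono hU hD bot_le i j) bot_le le_top hR

end upper

end DownUpKrull
namespace DownUpKrull

theorem not_devLE_step {A R N : Type*} [Ring A] [CommRing R] [AddCommGroup N] [Module A N]
    [Module R N] [SMulCommClass R A N] (J J' B : Submodule A N) (r : R) (hJ : J ≤ J')
    (hB : J' ≤ B) (h1 : ∀ v ∈ B, r • v ∈ J') (h2 : ∀ v ∈ B, r • v ∈ J → v ∈ J) {k : ℕ}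
    (h : ¬ devLE k J' B) : ¬ devLE (k + 1) J B := by
  intro hd
  apply h
  let m : ℕ → N →ₗ[A] N := fun i => DistribSMul.toLinearMap A N (r ^ i)
  have hm : ∀ i v, m i v = r ^ i • v := fun i v => rfl
  have hreg : ∀ i, ∀ v ∈ B, r ^ i • v ∈ J → v ∈ J := by
    intro i
    induction i with
    | zero => intro v _ hv; simpa using hv
    | succ i ih =>
      intro v hv hv2
      rw [pow_succ, mul_smul] at hv2
      exact h2 v hv (ih _ (hB (h1 v hv)) hv2)
  have hBi : ∀ i, ∀ v ∈ B, r ^ i • v ∈ B := by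
    intro i
    induction i with
    | zero => intro v hv; simpa using hv
    | succ i ih =>
      intro v hv
      rw [pow_succ, mul_smul]
      exact ih _ (hB (h1 v hv))
  have hanti : Antitone (fun i => J ⊔ B.map (m i)) := by
    apply antitone_nat_of_succ_le
    intro i
    refine sup_le_sup_left ?_ _
    rintro _ ⟨v, hv, rfl⟩
    refine ⟨r • v, hB (h1 v hv), ?_⟩
    rw [hm, hm, pow_succ, mul_smul]
  have hev := hd (fun i => J ⊔ B.map (m i)) hanti (fun i => ⟨le_sup_left, by
    refine sup_le (hJ.trans hB) ?_
    rintro _ ⟨v, hv, rfl⟩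
    exact hBi i v hv⟩)
  obtain ⟨i, hi⟩ := hev.exists
  refine devLE_transfer (fun X => J ⊔ X.map (m i)) k J' B _ _ hB ?_ ?_ ?_ ?_ hi
  · refine sup_le_sup_left ?_ _
    rintro _ ⟨v, hv, rfl⟩
    refine ⟨r • v, h1 v hv, ?_⟩
    rw [hm, hm, pow_succ, mul_smul]
  · exact le_rfl
  · intro x y _ hxy _
    exact sup_le_sup_left (Submodule.map_mono hxy) _
  · intro x y hx hxy hy hg v hv
    have : m i v ∈ J ⊔ x.map (m i) :=
      hg (le_sup_right (a := J) (Submodule.mem_map_of_mem hv))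
    obtain ⟨q, hq, _, ⟨u, hu, rfl⟩, hqu⟩ := Submodule.mem_sup.1 this
    have h3 : r ^ i • (v - u) ∈ J := by
      rw [smul_sub, ← hm, ← hm, ← hqu]
      simpa using hq
    have h4 := hreg i (v - u) (B.sub_mem (hy hv) (hy (hxy hu))) h3
    have h5 := x.add_mem (hx (hJ h4)) hu
    simpa using h5

section ops

variable {R : Type*} [CommRing R]

/-- Right module with basis `u^i d^j`. -/
abbrev NN (R : Type*) [CommRing R] := (ℕ × ℕ) →₀ R

/-- Structure constants: `d u^i d^j = mu^i u^i d^(j+1) + e (i,j) u^(i-1) d^j`. -/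
def ee (mu : R) (w : ℤ → R) : ℕ → ℕ → R
  | 0, _ => 0
  | i + 1, j => mu * ee mu w i j + w ((i : ℤ) - j)

/-- Raising operator. -/
noncomputable def Uop (R : Type*) [CommRing R] : Module.End R (NN R) :=
  Finsupp.linearCombination R (fun q : ℕ × ℕ => Finsupp.single (q.1 + 1, q.2) (1 : R))

/-- Lowering operator. -/
noncomputable def Dop (mu : R) (w : ℤ → R) : Module.End R (NN R) :=
  Finsupp.linearCombination R (fun q : ℕ × ℕ => Finsupp.single (q.1, q.2 + 1) (mu ^ q.1) +
    Finsupp.single (q.1 - 1, q.2) (ee mu w q.1 q.2))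

/-- Diagonal operator. -/
noncomputable def Wop (w : ℤ → R) : Module.End R (NN R) :=
  Finsupp.linearCombination R (fun q : ℕ × ℕ => Finsupp.single q (w ((q.1 : ℤ) - q.2)))

theorem Uop_single (i j : ℕ) (r : R) :
    Uop R (Finsupp.single (i, j) r) = Finsupp.single (i + 1, j) r := by
  simp [Uop, Finsupp.linearCombination_single]

theorem Dop_single (mu : R) (w : ℤ → R) (i j : ℕ) (r : R) :
    Dop mu w (Finsupp.single (i, j) r) = Finsupp.single (i, j + 1) (r * mu ^ i) +
      Finsupp.single (i - 1, j) (r * ee mu w i j) := by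
  simp [Dop, Finsupp.linearCombination_single]

theorem Wop_single (w : ℤ → R) (i j : ℕ) (r : R) :
    Wop w (Finsupp.single (i, j) r) = Finsupp.single (i, j) (r * w ((i : ℤ) - j)) := by
  simp [Wop, Finsupp.linearCombination_single]

theorem op_DU (mu : R) (w : ℤ → R) :
    Dop mu w * Uop R = mu • (Uop R * Dop mu w) + Wop w := by
  apply Finsupp.lhom_ext
  rintro ⟨i, j⟩ r
  simp only [Module.End.mul_apply, LinearMap.add_apply, LinearMap.smul_apply, Uop_single,
    Dop_single, Wop_single, map_add, smul_add, Finsupp.smul_single, smul_eq_mul, ee]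
  cases i with
  | zero =>
    simp [ee, mul_comm]
  | succ i =>
    simp only [Nat.add_sub_cancel, add_assoc, ← Finsupp.single_add]
    congr 2
    · ring
    · ring

theorem op_DW (mu lam φ : R) (w : ℤ → R) (hw : ∀ m, w (m + 1) = lam * w m + φ) :
    Dop mu w * Wop w = lam • (Wop w * Dop mu w) + φ • Dop mu w := by
  apply Finsupp.lhom_ext
  rintro ⟨i, j⟩ r
  simp only [Module.End.mul_apply, LinearMap.add_apply, LinearMap.smul_apply, 
    Dop_single, Wop_single, map_add, smul_add, Finsupp.smul_single, smul_eq_mul]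
  have h1 : w ((i : ℤ) - j) = lam * w ((i : ℤ) - (j + 1 : ℕ)) + φ := by
    rw [← hw]; congr 1; push_cast; ring
  have h2 : Finsupp.single (i - 1, j) (r * w ((i : ℤ) - j) * ee mu w i j) =
      Finsupp.single (i - 1, j) (lam * (r * ee mu w i j * w (((i - 1 : ℕ) : ℤ) - j))) +
      Finsupp.single (i - 1, j) (φ * (r * ee mu w i j)) := by
    cases i with
    | zero => simp [ee]
    | succ i =>
      rw [← Finsupp.single_add]
      have : w (((i + 1 : ℕ) : ℤ) - j) = lam * w (((i + 1 - 1 : ℕ) : ℤ) - j) + φ := by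
        rw [← hw]; congr 1; push_cast; ring
      rw [this]
      congr 1
      ring
  rw [h2, h1]
  have h3 : Finsupp.single (i, j + 1) (r * (lam * w ((i : ℤ) - (j + 1 : ℕ)) + φ) * mu ^ i) =
      Finsupp.single (i, j + 1) (lam * (r * mu ^ i * w ((i : ℤ) - (j + 1 : ℕ)))) +
      Finsupp.single (i, j + 1) (φ * (r * mu ^ i)) := by
    rw [← Finsupp.single_add]
    congr 1
    ring
  rw [h3]
  abel

theorem op_WU (lam φ : R) (w : ℤ → R) (hw : ∀ m, w (m + 1) = lam * w m + φ) :
    Wop w * Uop R = lam • (Uop R * Wop w) + φ • Uop R := by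
  apply Finsupp.lhom_ext
  rintro ⟨i, j⟩ r
  simp only [Module.End.mul_apply, LinearMap.add_apply, LinearMap.smul_apply, 
    Uop_single, Wop_single, Finsupp.smul_single, smul_eq_mul]
  rw [← Finsupp.single_add]
  have h1 : w (((i + 1 : ℕ) : ℤ) - j) = lam * w ((i : ℤ) - j) + φ := by
    rw [← hw]; congr 1; push_cast; ring
  rw [h1]
  congr 1
  ring

/-- Vectors with coefficients in prescribed ideals. -/
def JG (C : ℕ × ℕ → Ideal R) : Submodule R (NN R) where
  carrier := {v | ∀ q, v q ∈ C q}
  add_mem' := fun ha hb q => (C q).add_mem (ha q) (hb q)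
  zero_mem' := fun q => (C q).zero_mem
  smul_mem' := fun c v hv q => (C q).smul_mem c (hv q)

theorem JG_single {C : ℕ × ℕ → Ideal R} {q : ℕ × ℕ} {r : R} (h : r ∈ C q) :
    Finsupp.single q r ∈ JG C := by
  intro q'
  by_cases hq : q = q'
  · subst hq; simpa using h
  · rw [Finsupp.single_eq_of_ne (Ne.symm hq)]; exact (C q').zero_mem

theorem JG_map {C : ℕ × ℕ → Ideal R} (f : Module.End R (NN R)) (X : Submodule R (NN R))
    (h : ∀ i j, ∀ r ∈ C (i, j), f (Finsupp.single (i, j) r) ∈ X) {v : NN R} (hv : v ∈ JG C) :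
    f v ∈ X := by
  rw [← Finsupp.sum_single v, Finsupp.sum, map_sum]
  exact X.sum_mem fun q _ => h q.1 q.2 _ (hv q)

theorem JG_U {C : ℕ × ℕ → Ideal R} (h : ∀ i j, C (i, j) ≤ C (i + 1, j)) {v : NN R}
    (hv : v ∈ JG C) : Uop R v ∈ JG C := by
  refine JG_map _ _ ?_ hv
  intro i j r hr
  rw [Uop_single]
  exact JG_single (h i j hr)

theorem JG_D (mu : R) (w : ℤ → R) {C : ℕ × ℕ → Ideal R} (h : ∀ i j, C (i, j) ≤ C (i, j + 1))
    (h2 : ∀ i j, ∀ r ∈ C (i + 1, j), r * ee mu w (i + 1) j ∈ C (i, j))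
    {v : NN R} (hv : v ∈ JG C) : Dop mu w v ∈ JG C := by
  refine JG_map _ _ ?_ hv
  intro i j r hr
  rw [Dop_single]
  refine Submodule.add_mem _ (JG_single ((C _).mul_mem_right _ (h i j hr))) ?_
  cases i with
  | zero => simp [ee]
  | succ i => exact JG_single (h2 i j r hr)

end ops

section lower

variable {S A R : Type*} [CommRing S] [Ring A] [Algebra S A] [CommRing R] [Algebra S R]
  [Module A (NN R)] [SMulCommClass R A (NN R)] (mu : R) (w : ℤ → R) (U D : A)

/-- `A` acts on `NN R` through the operators. -/
structure Acts (S : Type*) [CommRing S] [Algebra S A] [Algebra S R] : Prop where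
  gen : Algebra.adjoin S {U, D} = ⊤
  actU : ∀ v : NN R, U • v = Uop R v
  actD : ∀ v : NN R, D • v = Dop mu w v
  actS : ∀ (s : S) (v : NN R), algebraMap S A s • v = algebraMap S R s • v

variable {mu w U D}

/-- Upgrade an invariant `R`-submodule to an `A`-submodule. -/
def toSub (h : Acts mu w U D S) (X : Submodule R (NN R)) (hU : ∀ v ∈ X, Uop R v ∈ X)
    (hD : ∀ v ∈ X, Dop mu w v ∈ X) : Submodule A (NN R) where
  carrier := X
  add_mem' := X.add_mem
  zero_mem' := X.zero_mem
  smul_mem' := by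
    intro a
    have : a ∈ Algebra.adjoin S {U, D} := by rw [h.gen]; trivial
    induction this using Algebra.adjoin_induction with
    | mem a ha =>
      intro v hv
      rcases ha with rfl | ha
      · rw [h.actU]; exact hU v hv
      · rw [Set.mem_singleton_iff] at ha
        subst ha
        rw [h.actD]; exact hD v hv
    | algebraMap s => 
      intro v hv
      rw [h.actS]
      exact X.smul_mem _ hv
    | add a b _ _ ha hb =>
      intro v hv
      rw [add_smul]
      exact X.add_mem (ha hv) (hb hv)
    | mul a b _ _ ha hb =>
      intro v hv
      rw [mul_smul]
      exact ha (hb hv)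

/-- Ideal family: zero below row `j`, `Q` in row `j`. -/
def Cfam (j : ℕ) (Q : Ideal R) : ℕ × ℕ → Ideal R := fun q =>
  if q.2 < j then ⊥ else if q.2 = j then Q else ⊤

/-- Ideal family: zero below row `j`, `Q` in row `j` up to column `m`. -/
def Cfam2 (j m : ℕ) (Q : Ideal R) : ℕ × ℕ → Ideal R := fun q =>
  if q.2 < j then ⊥ else if q.2 = j then (if q.1 < m then Q else ⊤) else ⊤

/-- Submodule attached to `Cfam`. -/
def JQ (h : Acts mu w U D S) (j : ℕ) (Q : Ideal R) : Submodule A (NN R) :=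
  toSub h (JG (Cfam j Q)) (fun v hv => JG_U (by intro i j'; exact le_rfl) hv)
    (fun v hv => JG_D mu w (by
      intro i l
      simp only [Cfam]
      split_ifs <;> first | exact bot_le | exact le_top | exact le_rfl | omega)
      (by intro i l r hr; exact Ideal.mul_mem_right _ _ hr) hv)

/-- Submodule attached to `Cfam2`. -/
def JQ2 (h : Acts mu w U D S) (j m : ℕ) (Q : Ideal R) (he : ∀ i l, ee mu w i l ∈ Q) :
    Submodule A (NN R) :=
  toSub h (JG (Cfam2 j m Q)) (fun v hv => JG_U (by
      intro i l
      simp only [Cfam2]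
      split_ifs <;> first | exact bot_le | exact le_top | exact le_rfl | omega) hv)
    (fun v hv => JG_D mu w (by
      intro i l
      simp only [Cfam2]
      split_ifs <;> first | exact bot_le | exact le_top | exact le_rfl | omega)
      (by
        intro i l r hr
        simp only [Cfam2] at hr ⊢
        split_ifs at hr ⊢ <;> first
          | exact Submodule.mem_top | omega | exact Ideal.mul_mem_left _ _ (he _ _)
          | (rw [Ideal.mem_bot] at hr ⊢; rw [hr, zero_mul])) hv)

theorem mem_JQ (h : Acts mu w U D S) (j : ℕ) (Q : Ideal R) (v : NN R) :
    v ∈ JQ h j Q ↔ ∀ q, v q ∈ Cfam j Q q := Iff.rfl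

theorem mem_JQ2 (h : Acts mu w U D S) (j m : ℕ) (Q : Ideal R) (he : ∀ i l, ee mu w i l ∈ Q)
    (v : NN R) : v ∈ JQ2 h j m Q he ↔ ∀ q, v q ∈ Cfam2 j m Q q := Iff.rfl

theorem JQ_mono (h : Acts mu w U D S) (j : ℕ) {Q Q' : Ideal R} (hQ : Q ≤ Q') :
    JQ h j Q ≤ JQ h j Q' := by
  intro v hv q
  have := hv q
  simp only [Cfam] at this ⊢
  split_ifs at this ⊢
  · exact this
  · exact hQ this
  · exact this

theorem JQ_base (h : Acts mu w U D S) (j : ℕ) (Q : Ideal R) (hQ : Q ≠ ⊤)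
    (he : ∀ i l, ee mu w i l ∈ Q) : ¬ devLE 1 (JQ h j Q) (JQ h j ⊤) := by
  intro hd
  have hev := hd (fun m => JQ2 h j m Q he) (by
    apply antitone_nat_of_succ_le
    intro m v hv q
    have := hv q
    simp only [Cfam2] at this ⊢
    split_ifs at this ⊢ <;> first | exact this | exact Submodule.mem_top | omega) (by
    intro m
    constructor
    · intro v hv q
      have := hv q
      simp only [Cfam, Cfam2] at this ⊢
      split_ifs at this ⊢ <;> first | exact this | exact Submodule.mem_top
    · intro v hv q
      have := hv q
      simp only [Cfam, Cfam2] at this ⊢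
      split_ifs at this ⊢ <;> first | exact this | exact Submodule.mem_top)
  obtain ⟨m, hm⟩ := hev.exists
  have h1 : Finsupp.single (m, j) (1 : R) ∈ JQ2 h j m Q he :=
    JG_single (by simp [Cfam2])
  have h2 := hm h1 (m, j)
  simp [Cfam2] at h2
  exact hQ ((Ideal.eq_top_iff_one _).2 h2)

theorem JQ_step (h : Acts mu w U D S) (j : ℕ) (Q Q' : Ideal R) (hQ : Q.IsPrime) (hQQ : Q ≤ Q')
    (r : R) (hr : r ∈ Q') (hr' : r ∉ Q) {k : ℕ} (hk : ¬ devLE k (JQ h j Q') (JQ h j ⊤)) :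
    ¬ devLE (k + 1) (JQ h j Q) (JQ h j ⊤) := by
  refine not_devLE_step _ _ _ r (JQ_mono h j hQQ) (JQ_mono h j le_top) ?_ ?_ hk
  · intro v hv q
    have := hv q
    rw [Finsupp.smul_apply, smul_eq_mul]
    simp only [Cfam] at this ⊢
    split_ifs at this ⊢
    · exact Ideal.mul_mem_left _ _ this
    · exact Ideal.mul_mem_right _ _ hr
    · trivial
  · intro v hv hrv q
    have h1 := hv q
    have h2 := hrv q
    rw [Finsupp.smul_apply, smul_eq_mul] at h2
    simp only [Cfam] at h1 h2 ⊢
    split_ifs at h1 h2 ⊢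
    · exact h1
    · exact (hQ.mem_or_mem h2).resolve_left hr'
    · trivial

theorem lower_bound (h : Acts mu w U D S) (ht : ℕ) (Q : ℕ → Ideal R) (r : ℕ → R)
    (hQp : ∀ k < ht, (Q k).IsPrime) (hQQ : ∀ k < ht, Q k ≤ Q (k + 1))
    (hr : ∀ k < ht, r k ∈ Q (k + 1)) (hr' : ∀ k < ht, r k ∉ Q k) (htop : Q ht ≠ ⊤)
    (he : ∀ i l, ee mu w i l ∈ Q ht) : ¬ devLE (ht + 2) (⊥ : Submodule A (NN R)) ⊤ := by
  have key : ∀ j m, m ≤ ht → ¬ devLE (m + 1) (JQ h j (Q (ht - m))) (JQ h j ⊤) := by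
    intro j m
    induction m with
    | zero => intro _; exact JQ_base h j _ htop he
    | succ m ih =>
      intro hm
      have e : ht - m = ht - (m + 1) + 1 := by omega
      have hlt : ht - (m + 1) < ht := by omega
      refine JQ_step h j _ (Q (ht - m)) (hQp _ hlt) ?_ (r (ht - (m + 1))) ?_ (hr' _ hlt)
        (ih (by omega))
      · rw [e]; exact hQQ _ hlt
      · rw [e]; exact hr _ hlt
  intro hd
  have hsucc : ∀ j, JQ h (j + 1) ⊤ ≤ JQ h j (Q 0) := by
    intro j v hv q
    have := hv q
    simp only [Cfam] at this ⊢
    split_ifs at this ⊢ <;> first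
      | exact this
      | trivial
      | (rw [Ideal.mem_bot] at this; rw [this]; exact Ideal.zero_mem _)
      | omega
  have hev := hd (fun j => JQ h j ⊤)
    (antitone_nat_of_succ_le fun j => (hsucc j).trans (JQ_mono h j le_top))
    (fun j => ⟨bot_le, le_top⟩)
  obtain ⟨j, hj⟩ := hev.exists
  have := key j ht le_rfl
  rw [Nat.sub_self] at this
  exact this (devLE_mono (JQ_mono h j le_top) (hsucc j) le_rfl hj)

end lower

end DownUpKrull
namespace DownUpKrull

open DownUp

theorem exists_w {R : Type*} [CommRing R] (lam φ x : R) (hlam : IsUnit lam) :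
    ∃ w : ℤ → R, w 0 = x ∧ ∀ m, w (m + 1) = lam * w m + φ := by
  obtain ⟨l, rfl⟩ := hlam
  let e : Equiv.Perm R :=
    { toFun := fun r => l * r + φ
      invFun := fun r => ↑l⁻¹ * (r - φ)
      left_inv := fun r => by simp
      right_inv := fun r => by simp }
  refine ⟨fun m => (e ^ m) x, by simp, fun m => ?_⟩
  change (e ^ (m + 1)) x = e ((e ^ m) x)
  rw [add_comm, zpow_add, zpow_one, Equiv.Perm.mul_apply]

theorem ee_mem {R : Type*} [CommRing R] (Q : Ideal R) (lam φ mu : R) (hlam : IsUnit lam)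
    (w : ℤ → R) (hw : ∀ m, w (m + 1) = lam * w m + φ) (h0 : w 0 ∈ Q) (hφ : φ ∈ Q) (i l : ℕ) :
    ee mu w i l ∈ Q := by
  have hwm : ∀ m, w m ∈ Q := by
    intro m
    induction m using Int.induction_on with
    | zero => exact h0
    | succ i ih => rw [hw]; exact Q.add_mem (Q.mul_mem_left _ ih) hφ
    | pred i ih =>
      have := hw (-(i : ℤ) - 1)
      rw [sub_add_cancel] at this
      rw [this] at ih
      have h2 := Q.sub_mem ih hφ
      rw [add_sub_cancel_right] at h2
      exact (Ideal.unit_mul_mem_iff_mem _ hlam).1 h2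
  induction i with
  | zero => exact Q.zero_mem
  | succ i ih => exact Q.add_mem (Q.mul_mem_left _ ih) (hwm _)

section primes

variable {K : Type*} [Field K] {n : ℕ} (p : Fin n → K)

/-- Substitute the first `k` coordinates of the point `p`. -/
noncomputable def evk (k : ℕ) : MvPolynomial (Fin n) K →ₐ[K] MvPolynomial (Fin n) K :=
  MvPolynomial.aeval (fun i => if (i : ℕ) < k then MvPolynomial.C (p i) else MvPolynomial.X i)

/-- Chain of prime ideals. -/
noncomputable def Qk : ℕ → Ideal (Polynomial (MvPolynomial (Fin n) K))
  | 0 => ⊥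
  | k + 1 => RingHom.ker ((evk p k).toRingHom.comp (Polynomial.evalRingHom 0))

/-- Elements separating the primes of the chain. -/
noncomputable def rk : ℕ → Polynomial (MvPolynomial (Fin n) K)
  | 0 => Polynomial.X
  | k + 1 => if h : k < n then
      Polynomial.C (MvPolynomial.X ⟨k, h⟩ - MvPolynomial.C (p ⟨k, h⟩)) else 0

theorem mem_Qk (k : ℕ) (f : Polynomial (MvPolynomial (Fin n) K)) :
    f ∈ Qk p (k + 1) ↔ evk p k (f.eval 0) = 0 := Iff.rfl

theorem Qk_prime (k : ℕ) : (Qk p k).IsPrime := by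
  cases k with
  | zero => exact Ideal.isPrime_bot
  | succ k => exact RingHom.ker_isPrime _

theorem evk_evk (k : ℕ) (f : MvPolynomial (Fin n) K) :
    evk p (k + 1) (evk p k f) = evk p (k + 1) f := by
  have : (evk p (k + 1)).comp (evk p k) = evk p (k + 1) := by
    apply MvPolynomial.algHom_ext
    intro i
    simp only [evk, AlgHom.comp_apply, MvPolynomial.aeval_X]
    split_ifs with h1 h2 h2
    · simp [MvPolynomial.algebraMap_eq]
    · omega
    · rw [MvPolynomial.aeval_X, if_pos h2]
    · rw [MvPolynomial.aeval_X, if_neg h2]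
  exact DFunLike.congr_fun this f

theorem Qk_le (k : ℕ) : Qk p k ≤ Qk p (k + 1) := by
  cases k with
  | zero => exact bot_le
  | succ k =>
    intro f hf
    rw [mem_Qk] at hf ⊢
    rw [← evk_evk, hf, map_zero]

theorem rk_mem (k : ℕ) : rk p k ∈ Qk p (k + 1) := by
  rw [mem_Qk]
  cases k with
  | zero => simp [rk]
  | succ k =>
    simp only [rk]
    split_ifs with h
    · simp [evk, MvPolynomial.algebraMap_eq]
    · simp

theorem rk_not_mem (k : ℕ) (hk : k < n + 1) : rk p k ∉ Qk p k := by
  cases k with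
  | zero => simp [rk, Qk]
  | succ k =>
    have h : k < n := by omega
    rw [mem_Qk]
    simp only [rk, h, dif_pos, Polynomial.eval_C]
    intro h0
    simp only [evk, map_sub, MvPolynomial.aeval_X, MvPolynomial.aeval_C, lt_irrefl, if_false,
      MvPolynomial.algebraMap_eq] at h0
    have h1 := congrArg (MvPolynomial.eval (fun _ => p ⟨k, h⟩ + 1)) h0
    simp at h1

theorem Qk_ne_top (k : ℕ) : Qk p k ≠ ⊤ := (Qk_prime p k).ne_top

theorem phi_mem (φ : MvPolynomial (Fin n) K) (h : MvPolynomial.eval p φ = 0) :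
    Polynomial.C φ ∈ Qk p (n + 1) := by
  rw [mem_Qk, Polynomial.eval_C]
  have : evk p n = (Algebra.ofId K (MvPolynomial (Fin n) K)).comp (MvPolynomial.aeval p) := by
    apply MvPolynomial.algHom_ext
    intro i
    simp [evk, Algebra.ofId_apply, MvPolynomial.algebraMap_eq]
  rw [this, AlgHom.comp_apply, MvPolynomial.aeval_eq_eval]
  simp [h]

end primes

/-- The two relations give the relations for `W = DU - mu UD`. -/
theorem rel_W {S A : Type*} [CommRing S] [Ring A] [Algebra S A] {U D : A} {al be lam mu φ : S}
    (h1 : D * D * U = al • (D * U * D) + be • (U * D * D) + φ • D)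
    (h2 : D * U * U = al • (U * D * U) + be • (U * U * D) + φ • U)
    (ha : al = lam + mu) (hb : be = -(lam * mu)) :
    D * U = mu • (U * D) + (D * U - mu • (U * D)) ∧
    D * (D * U - mu • (U * D)) = lam • ((D * U - mu • (U * D)) * D) + φ • D ∧
    (D * U - mu • (U * D)) * U = lam • (U * (D * U - mu • (U * D))) + φ • U := by
  subst ha hb
  refine ⟨(add_sub_cancel _ _).symm, ?_, ?_⟩
  · rw [mul_sub, ← mul_assoc, h1]
    simp only [sub_mul, mul_smul_comm, smul_mul_assoc, smul_sub, smul_smul, add_smul, neg_smul,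
      mul_assoc]
    abel
  · rw [sub_mul, h2]
    simp only [mul_sub, mul_smul_comm, smul_mul_assoc, smul_sub, smul_smul, add_smul, neg_smul,
      mul_assoc]
    abel

theorem W_rel {S A : Type*} [CommRing S] [Ring A] [Algebra S A] {U D W : A} {al be lam mu φ : S}
    (hDU : D * U = mu • (U * D) + W)
    (hDW : D * W = lam • (W * D) + φ • D)
    (hWU : W * U = lam • (U * W) + φ • U)
    (ha : al = lam + mu) (hb : be = -(lam * mu)) :
    D * D * U = al • (D * U * D) + be • (U * D * D) + φ • D ∧
    D * U * U = al • (U * D * U) + be • (U * U * D) + φ • U := by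
  have hW : W = D * U - mu • (U * D) := by rw [hDU]; abel
  subst ha hb
  rw [hW] at hDW hWU
  constructor
  · rw [mul_sub, ← mul_assoc, sub_eq_iff_eq_add] at hDW
    rw [hDW]
    simp only [sub_mul, mul_smul_comm, smul_mul_assoc, smul_sub, smul_smul, add_smul, neg_smul,
      mul_assoc]
    abel
  · rw [sub_mul, sub_eq_iff_eq_add] at hWU
    rw [hWU]
    simp only [mul_sub, mul_smul_comm, smul_mul_assoc, smul_sub, smul_smul, add_smul, neg_smul,
      mul_assoc]
    abel

theorem lower_gen {S A : Type*} [CommRing S] [Ring A] [Algebra S A] {U D : A}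
    {al be lam mu φ : S} (hlam : IsUnit lam) (hgen : Algebra.adjoin S {U, D} = ⊤)
    (ha : al = lam + mu) (hb : be = -(lam * mu))
    (hlift : ∀ u d : Module.End (Polynomial S) (NN (Polynomial S)),
      (d * d * u = al • (d * u * d) + be • (u * d * d) + φ • d) →
      (d * u * u = al • (u * d * u) + be • (u * u * d) + φ • u) →
      ∃ ρ : A →ₐ[S] Module.End (Polynomial S) (NN (Polynomial S)), ρ U = u ∧ ρ D = d)
    (ht : ℕ) (Q : ℕ → Ideal (Polynomial S)) (r : ℕ → Polynomial S)
    (hQp : ∀ k < ht, (Q k).IsPrime) (hQQ : ∀ k < ht, Q k ≤ Q (k + 1))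
    (hr : ∀ k < ht, r k ∈ Q (k + 1)) (hr' : ∀ k < ht, r k ∉ Q k) (htop : Q ht ≠ ⊤)
    (hX : Polynomial.X ∈ Q ht) (hφ : Polynomial.C φ ∈ Q ht) :
    ¬ devLE (ht + 2) (⊥ : Submodule A A) ⊤ := by
  have hlR : IsUnit (Polynomial.C lam) := hlam.map Polynomial.C
  obtain ⟨w, hw0, hw⟩ := exists_w (Polynomial.C lam) (Polynomial.C φ) (Polynomial.X) hlR
  have hsm : ∀ (s : S) (f : Module.End (Polynomial S) (NN (Polynomial S))),
      s • f = Polynomial.C s • f := by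
    intro s f
    rw [← Polynomial.algebraMap_eq, algebraMap_smul]
  have hDU : Dop (Polynomial.C mu) w * Uop (Polynomial S) =
      mu • (Uop (Polynomial S) * Dop (Polynomial.C mu) w) + Wop w := by
    rw [hsm]; exact op_DU (Polynomial.C mu) w
  have hDW : Dop (Polynomial.C mu) w * Wop w =
      lam • (Wop w * Dop (Polynomial.C mu) w) + φ • Dop (Polynomial.C mu) w := by
    rw [hsm, hsm]; exact op_DW (Polynomial.C mu) _ _ w hw
  have hWU : Wop w * Uop (Polynomial S) =
      lam • (Uop (Polynomial S) * Wop w) + φ • Uop (Polynomial S) := by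
    rw [hsm, hsm]; exact op_WU _ _ w hw
  obtain ⟨e1, e2⟩ := W_rel (S := S)
    (A := Module.End (Polynomial S) (NN (Polynomial S))) hDU hDW hWU ha hb
  obtain ⟨ρ, hρu, hρd⟩ := hlift _ _ e1 e2
  letI : Module (A) (NN (Polynomial S)) := Module.compHom (NN (Polynomial S)) ρ.toRingHom
  have hact : ∀ (a : A) (v : NN (Polynomial S)), a • v = ρ a v := fun a v => rfl
  haveI : SMulCommClass (Polynomial S) (A) (NN (Polynomial S)) := ⟨fun r a v => by
    rw [hact, hact, map_smul]⟩
  have hActs : Acts (Polynomial.C mu) w (U) (D) S :=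
    { gen := hgen
      actU := fun v => by rw [hact, hρu]
      actD := fun v => by rw [hact, hρd]
      actS := fun s v => by
        rw [hact, AlgHom.commutes, Module.algebraMap_end_apply, algebraMap_smul] }
  have hlow := lower_bound hActs ht Q r hQp hQQ hr hr' htop
    (ee_mem _ _ _ (Polynomial.C mu) hlR w hw (by rw [hw0]; exact hX) hφ)
  intro hd
  apply hlow
  -- the cyclic map
  let e0 : NN (Polynomial S) := Finsupp.single (0, 0) 1
  let c : A →ₗ[A] NN (Polynomial S) := LinearMap.toSpanSingleton _ _ e0
  have hWe : Wop w e0 = (Polynomial.X : (Polynomial S)) • e0 := by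
    rw [Wop_single, Finsupp.smul_single]
    simp [hw0]
  obtain ⟨Wa, hWa⟩ : ∃ Wa : A, ρ Wa = Wop w := by
    refine ⟨D * U - mu • (U * D), ?_⟩
    rw [map_sub, map_smul, map_mul, map_mul, hρu, hρd, hDU]
    abel
  have hpoly : ∀ r : (Polynomial S), ∃ a : A, ρ a e0 = r • e0 := by
    intro r
    induction r using Polynomial.induction_on' with
    | add f g hf hg =>
      obtain ⟨a, ha⟩ := hf
      obtain ⟨b, hb⟩ := hg
      exact ⟨a + b, by rw [map_add, LinearMap.add_apply, ha, hb, add_smul]⟩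
    | monomial m s =>
      refine ⟨s • Wa ^ m, ?_⟩
      have : (Wop w ^ m) e0 = (Polynomial.X ^ m : (Polynomial S)) • e0 := by
        induction m with
        | zero => simp
        | succ m ih => 
          rw [pow_succ', Module.End.mul_apply, ih, map_smul, hWe, smul_smul, ← pow_succ]
      rw [map_smul, map_pow, hWa, LinearMap.smul_apply, this, ← Polynomial.C_mul_X_pow_eq_monomial,
        mul_smul, ← Polynomial.algebraMap_eq, algebraMap_smul]
  have hDp : ∀ j, (Dop (Polynomial.C mu) w ^ j) e0 = Finsupp.single (0, j) 1 := by
    intro j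
    induction j with
    | zero => rfl
    | succ j ih =>
      rw [pow_succ', Module.End.mul_apply, ih, Dop_single]
      simp [ee]
  have hUp : ∀ i j, (Uop (Polynomial S) ^ i) (Finsupp.single (0, j) 1) = Finsupp.single (i, j) 1 := by
    intro i j
    induction i with
    | zero => rfl
    | succ i ih => rw [pow_succ', Module.End.mul_apply, ih, Uop_single]
  have hsurj : Function.Surjective c := by
    rw [← LinearMap.range_eq_top, eq_top_iff]
    intro v _
    rw [← Finsupp.sum_single v, Finsupp.sum]
    refine Submodule.sum_mem _ fun q _ => ?_
    obtain ⟨a, ha⟩ := hpoly (v q)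
    refine ⟨U ^ q.1 * D ^ q.2 * a, ?_⟩
    change ρ (U ^ q.1 * D ^ q.2 * a) e0 = _
    rw [map_mul, map_mul, map_pow, map_pow, hρu, hρd, Module.End.mul_apply,
      Module.End.mul_apply, ha, map_smul, map_smul, hDp, hUp, Finsupp.smul_single]
    simp
  refine devLE_transfer (fun X => X.comap c) (ht + 2) ⊥ ⊤ ⊥ ⊤ bot_le bot_le le_top ?_ ?_ hd
  · intro x y _ hxy _
    exact Submodule.comap_mono hxy
  · intro x y _ _ _ hg v hv
    obtain ⟨a, rfl⟩ := hsurj v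
    exact hg hv

section final

variable {K : Type} [Field K] {n : ℕ} (α β : K) (φ : MvPolynomial (Fin n) K)

/-- The quotient map, linear over the polynomial base. -/
noncomputable abbrev mkS : F K n →ₐ[MvPolynomial (Fin n) K] A α β φ :=
  RingQuot.mkAlgHom (MvPolynomial (Fin n) K) (Rel α β φ)

theorem gen_A : Algebra.adjoin (MvPolynomial (Fin n) K)
    {mkS α β φ uF, mkS α β φ dF} = ⊤ := by
  have h1 : Set.range (FreeAlgebra.ι (MvPolynomial (Fin n) K) : Gen → F K n) = {uF, dF} := by
    ext x
    constructor
    · rintro ⟨g, rfl⟩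
      cases g
      · left; rfl
      · right; rfl
    · rintro (rfl | rfl)
      · exact ⟨_, rfl⟩
      · exact ⟨_, rfl⟩
  have h2 := FreeAlgebra.adjoin_range_ι (MvPolynomial (Fin n) K) Gen
  rw [h1] at h2
  have h3 := AlgHom.map_adjoin (mkS α β φ) {uF, dF}
  rw [h2, Set.image_pair] at h3
  rw [← h3, Algebra.map_top, AlgHom.range_eq_top]
  exact RingQuot.mkAlgHom_surjective _ _

theorem smul_F (a : K) (x : F K n) :
    a • x = (MvPolynomial.C a : MvPolynomial (Fin n) K) • x :=
  (algebraMap_smul (MvPolynomial (Fin n) K) a x).symm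

/-- Relations hold in any quotient. -/
theorem map_rel {B : Type*} [Semiring B] [Algebra (MvPolynomial (Fin n) K) B]
    (f : F K n →ₐ[MvPolynomial (Fin n) K] B) :
    (f (α • (dF * uF * dF) + β • (uF * dF * dF) + algebraMap _ _ φ * dF) =
      (MvPolynomial.C α : MvPolynomial (Fin n) K) • (f dF * f uF * f dF) +
      (MvPolynomial.C β : MvPolynomial (Fin n) K) • (f uF * f dF * f dF) + φ • f dF) ∧
    (f (α • (uF * dF * uF) + β • (uF * uF * dF) + uF * algebraMap _ _ φ) =
      (MvPolynomial.C α : MvPolynomial (Fin n) K) • (f uF * f dF * f uF) +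
      (MvPolynomial.C β : MvPolynomial (Fin n) K) • (f uF * f uF * f dF) + φ • f uF) := by
  constructor
  · rw [smul_F α, smul_F β, ← Algebra.smul_def]
    simp only [map_add, map_mul, map_smul]
  · rw [smul_F α, smul_F β, ← Algebra.commutes, ← Algebra.smul_def]
    simp only [map_add, map_mul, map_smul]

theorem rel_A :
    (mkS α β φ dF * mkS α β φ dF * mkS α β φ uF =
      (MvPolynomial.C α : MvPolynomial (Fin n) K) • (mkS α β φ dF * mkS α β φ uF * mkS α β φ dF) +
      (MvPolynomial.C β : MvPolynomial (Fin n) K) • (mkS α β φ uF * mkS α β φ dF * mkS α β φ dF) +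
      φ • mkS α β φ dF) ∧
    (mkS α β φ dF * mkS α β φ uF * mkS α β φ uF =
      (MvPolynomial.C α : MvPolynomial (Fin n) K) • (mkS α β φ uF * mkS α β φ dF * mkS α β φ uF) +
      (MvPolynomial.C β : MvPolynomial (Fin n) K) • (mkS α β φ uF * mkS α β φ uF * mkS α β φ dF) +
      φ • mkS α β φ uF) := by
  obtain ⟨m1, m2⟩ := map_rel α β φ (mkS α β φ)
  constructor
  · rw [← m1, ← map_mul, ← map_mul]
    exact RingQuot.mkAlgHom_rel (MvPolynomial (Fin n) K) (Rel.ddu (α := α) (β := β) (φ := φ))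
  · rw [← m2, ← map_mul, ← map_mul]
    exact RingQuot.mkAlgHom_rel (MvPolynomial (Fin n) K) (Rel.duu (α := α) (β := β) (φ := φ))

theorem lift_A {B : Type*} [Ring B] [Algebra (MvPolynomial (Fin n) K) B] (u d : B)
    (h1 : d * d * u = (MvPolynomial.C α : MvPolynomial (Fin n) K) • (d * u * d) +
      (MvPolynomial.C β : MvPolynomial (Fin n) K) • (u * d * d) + φ • d)
    (h2 : d * u * u = (MvPolynomial.C α : MvPolynomial (Fin n) K) • (u * d * u) +
      (MvPolynomial.C β : MvPolynomial (Fin n) K) • (u * u * d) + φ • u) :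
    ∃ ρ : A α β φ →ₐ[MvPolynomial (Fin n) K] B,
      ρ (mkS α β φ uF) = u ∧ ρ (mkS α β φ dF) = d := by
  let ρ0 : F K n →ₐ[MvPolynomial (Fin n) K] B :=
    FreeAlgebra.lift (MvPolynomial (Fin n) K) (fun g => match g with | Gen.u => u | Gen.d => d)
  have hρu : ρ0 uF = u := FreeAlgebra.lift_ι_apply _ _
  have hρd : ρ0 dF = d := FreeAlgebra.lift_ι_apply _ _
  obtain ⟨m1, m2⟩ := map_rel α β φ ρ0
  have hρ0 : ∀ ⦃x y⦄, Rel α β φ x y → ρ0 x = ρ0 y := by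
    intro x y hxy
    cases hxy with
    | ddu => rw [m1, map_mul, map_mul, hρu, hρd]; exact h1
    | duu => rw [m2, map_mul, map_mul, hρu, hρd]; exact h2
  refine ⟨RingQuot.liftAlgHom (MvPolynomial (Fin n) K) ⟨ρ0, hρ0⟩, ?_, ?_⟩
  · rw [← hρu]
    exact RingQuot.liftAlgHom_mkAlgHom_apply _ ρ0 hρ0 uF
  · rw [← hρd]
    exact RingQuot.liftAlgHom_mkAlgHom_apply _ ρ0 hρ0 dF

theorem upper_A (lam mu : K) (hlam : lam ≠ 0) (hmu : mu ≠ 0) (ha : α = lam + mu)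
    (hb : β = -(lam * mu)) :
    devLE (n + 4) (⊥ : Submodule (A α β φ) (A α β φ)) ⊤ := by
  obtain ⟨h1, h2⟩ := rel_A α β φ
  obtain ⟨h5, h3, h4⟩ := rel_W (S := MvPolynomial (Fin n) K) (A := A α β φ)
    (U := mkS α β φ uF) (D := mkS α β φ dF) (al := MvPolynomial.C α) (be := MvPolynomial.C β)
    (lam := MvPolynomial.C lam) (mu := MvPolynomial.C mu) (φ := φ) h1 h2
    (by rw [ha, map_add]) (by rw [hb, map_neg, map_mul])
  exact upper_bound (S := MvPolynomial (Fin n) K) (A := A α β φ)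
    ((isUnit_iff_ne_zero.2 hlam).map MvPolynomial.C)
    ((isUnit_iff_ne_zero.2 hmu).map MvPolynomial.C) h5 h3 h4
    (gen_A α β φ) (devLE_mvPolynomial K n)

theorem lower_A (lam mu : K) (hlam : lam ≠ 0) (ha : α = lam + mu)
    (hb : β = -(lam * mu)) (p : Fin n → K) (hp : MvPolynomial.eval p φ = 0) :
    ¬ devLE (n + 3) (⊥ : Submodule (A α β φ) (A α β φ)) ⊤ :=
  lower_gen (S := MvPolynomial (Fin n) K) (A := A α β φ)
    (al := MvPolynomial.C α) (be := MvPolynomial.C β)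
    (lam := MvPolynomial.C lam) (mu := MvPolynomial.C mu) (φ := φ)
    ((isUnit_iff_ne_zero.2 hlam).map MvPolynomial.C) (gen_A α β φ)
    (by rw [ha, map_add]) (by rw [hb, map_neg, map_mul])
    (fun u d h1 h2 => lift_A α β φ u d h1 h2)
    (n + 1) (Qk p) (rk p) (fun k _ => Qk_prime p k)
    (fun k _ => Qk_le p k) (fun k _ => rk_mem p k) (fun k hk => rk_not_mem p k hk)
    (Qk_ne_top p _) (by rw [mem_Qk]; simp) (phi_mem p φ hp)

end final

end DownUpKrull
open DownUp in
/-- If K is algebraically closed, β ≠ 0 and φ is not constant, then the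
Gabriel–Rentschler Krull dimension of A(α,β,φ) (as a left module over itself)
is exactly n+3: it is ≤ n+3 but not ≤ n+2. -/
theorem downUp_krullDim {K : Type} [Field K] [IsAlgClosed K] {n : ℕ}
    (α β : K) (hβ : β ≠ 0) (φ : MvPolynomial (Fin n) K)
    (hφ : ∀ c : K, φ ≠ MvPolynomial.C c) :
    krullLE (A α β φ) (n + 4) (A α β φ) ∧
    ¬ krullLE (A α β φ) (n + 3) (A α β φ) := by
  obtain ⟨lam, hl⟩ := IsAlgClosed.exists_root
    (Polynomial.X ^ 2 - Polynomial.C α * Polynomial.X - Polynomial.C β : Polynomial K) (by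
      have : (Polynomial.X ^ 2 - Polynomial.C α * Polynomial.X - Polynomial.C β :
          Polynomial K).degree = 2 := by compute_degree!
      rw [this]
      decide)
  have hl2 : lam ^ 2 - α * lam - β = 0 := by simpa [Polynomial.IsRoot] using hl
  have ha : α = lam + (α - lam) := by ring
  have hb : β = -(lam * (α - lam)) := by linear_combination -hl2
  have h0 : lam * (α - lam) ≠ 0 := by
    intro h
    rw [h, neg_zero] at hb
    exact hβ hb
  obtain ⟨p, hp⟩ := DownUpKrull.exists_zero φ hφ
  rw [DownUpKrull.krullLE_iff, DownUpKrull.krullLE_iff]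
  exact ⟨DownUpKrull.upper_A α β φ lam (α - lam) (left_ne_zero_of_mul h0)
      (right_ne_zero_of_mul h0) ha hb,
    DownUpKrull.lower_A α β φ lam (α - lam) (left_ne_zero_of_mul h0) ha hb p hp⟩
end

section
/- Let K have characteristic 0 and let r, s ∈ K* with r, s ≠ 1 and rⁱsʲ = 1 only for i = j = 0; set α = r+s, β = −rs, n = 1. For φ₁, φ₂ ∈ K[t], the down-up algebras A(α,β,φ₁) and A(α,β,φ₂) are isomorphic as K-algebras if and only if there exist η, a ∈ K* and b ∈ K with η·φ₂(t) = φ₁(at+b). -/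
open MvPolynomial

namespace DownUpAux
open DownUp

variable {K : Type} [Field K]

theorem mk_surj (α β : K) (φ : MvPolynomial (Fin 1) K) :
    Function.Surjective (RingQuot.mkAlgHom K (Rel α β φ)) :=
  RingQuot.mkAlgHom_surjective K _

theorem T_comm (α β : K) (φ p : MvPolynomial (Fin 1) K) (x : A α β φ) :
    T α β φ p * x = x * T α β φ p := by
  obtain ⟨y, rfl⟩ := mk_surj α β φ x
  change RingQuot.mkAlgHom K (Rel α β φ) (algebraMap _ _ p) * _ =
    _ * RingQuot.mkAlgHom K (Rel α β φ) (algebraMap _ _ p)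
  rw [← map_mul, ← map_mul, Algebra.commutes]

theorem rel_ddu (α β : K) (φ : MvPolynomial (Fin 1) K) :
    D α β φ * D α β φ * U α β φ = α • (D α β φ * U α β φ * D α β φ)
      + β • (U α β φ * D α β φ * D α β φ) + T α β φ φ * D α β φ := by
  have := RingQuot.mkAlgHom_rel K (Rel.ddu (α := α) (β := β) (φ := φ))
  simp only [map_mul, map_add, map_smul] at this
  exact this

theorem rel_duu (α β : K) (φ : MvPolynomial (Fin 1) K) :
    D α β φ * U α β φ * U α β φ = α • (U α β φ * D α β φ * U α β φ)
      + β • (U α β φ * U α β φ * D α β φ) + U α β φ * T α β φ φ := by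
  have := RingQuot.mkAlgHom_rel K (Rel.duu (α := α) (β := β) (φ := φ))
  simp only [map_mul, map_add, map_smul] at this
  exact this

theorem exists_lift {B : Type} [Ring B] [Algebra K B] (α β : K) (φ : MvPolynomial (Fin 1) K)
    (S : MvPolynomial (Fin 1) K →ₐ[K] B) (u d : B) (hS : ∀ p x, S p * x = x * S p)
    (h1 : d * d * u = α • (d * u * d) + β • (u * d * d) + S φ * d)
    (h2 : d * u * u = α • (u * d * u) + β • (u * u * d) + u * S φ) :
    ∃ f : A α β φ →ₐ[K] B, f (U α β φ) = u ∧ f (D α β φ) = d ∧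
      ∀ p, f (T α β φ p) = S p := by
  let _ : Algebra (MvPolynomial (Fin 1) K) B := S.toRingHom.toAlgebra' hS
  have _ : IsScalarTower K (MvPolynomial (Fin 1) K) B :=
    IsScalarTower.of_algebraMap_eq fun x => (S.commutes x).symm
  let g : F K 1 →ₐ[MvPolynomial (Fin 1) K] B :=
    FreeAlgebra.lift _ (fun x => match x with | Gen.u => u | Gen.d => d)
  have gu : g uF = u := FreeAlgebra.lift_ι_apply _ _
  have gd : g dF = d := FreeAlgebra.lift_ι_apply _ _
  have gT : ∀ p, g (algebraMap _ _ p) = S p := fun p => g.commutes p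
  let g' : F K 1 →ₐ[K] B := g.restrictScalars K
  have gu' : g' uF = u := gu
  have gd' : g' dF = d := gd
  have gT' : ∀ p, g' (algebraMap _ _ p) = S p := gT
  have hrel : ∀ ⦃x y : F K 1⦄, Rel α β φ x y → g' x = g' y := by
    intro x y h
    cases h with
    | ddu => simp only [map_mul, map_add, map_smul, gu', gd', gT']; exact h1
    | duu => simp only [map_mul, map_add, map_smul, gu', gd', gT']; exact h2
  have hl := RingQuot.liftAlgHom_mkAlgHom_apply K g' hrel
  refine ⟨RingQuot.liftAlgHom K ⟨g', hrel⟩, ?_, ?_, ?_⟩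
  · exact (hl _).trans gu
  · exact (hl _).trans gd
  · intro p
    exact (hl _).trans (gT p)

theorem hom_ext {B : Type} [Semiring B] [Algebra K B] {α β : K} {φ : MvPolynomial (Fin 1) K}
    {f g : A α β φ →ₐ[K] B} (hu : f (U α β φ) = g (U α β φ)) (hd : f (D α β φ) = g (D α β φ))
    (ht : f (T α β φ (X 0)) = g (T α β φ (X 0))) : f = g := by
  have hT : f.comp (T α β φ) = g.comp (T α β φ) := by
    apply MvPolynomial.algHom_ext
    intro i
    rw [Subsingleton.elim i 0]
    exact ht
  refine AlgHom.ext fun x => ?_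
  obtain ⟨y, rfl⟩ := mk_surj α β φ x
  induction y using FreeAlgebra.induction with
  | grade0 p => exact DFunLike.congr_fun hT p
  | grade1 x =>
    cases x
    · exact hu
    · exact hd
  | mul a b ha hb => simp only [map_mul, ha, hb]
  | add a b ha hb => simp only [map_add, ha, hb]

end DownUpAux
namespace DownUpAux

section Comm

variable {K : Type} [Field K]

/-- The polynomial `c u d - q(t)`. -/
noncomputable def fP (c : K) (q : Polynomial K) : MvPolynomial (Fin 3) K :=
  C c * (X 1 * X 2) - Polynomial.aeval (X 0) q

/-- The abelianization of the down-up algebra. -/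
abbrev Q (c : K) (q : Polynomial K) : Type :=
  MvPolynomial (Fin 3) K ⧸
    (Ideal.span {X 1 * fP c q, X 2 * fP c q} : Ideal (MvPolynomial (Fin 3) K))

/-- The quotient map. -/
noncomputable def mkQ (c : K) (q : Polynomial K) : MvPolynomial (Fin 3) K →ₐ[K] Q c q :=
  Ideal.Quotient.mkₐ K _

theorem mkQ_surj (c : K) (q : Polynomial K) : Function.Surjective (mkQ c q) :=
  Ideal.Quotient.mk_surjective

/-- The three generators of `Q`. -/
noncomputable def gQ (c : K) (q : Polynomial K) (i : Fin 3) : Q c q := mkQ c q (X i)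

theorem hom_fP {B : Type} [CommRing B] [Algebra K B] (g : MvPolynomial (Fin 3) K →ₐ[K] B)
    (c : K) (q : Polynomial K) :
    g (fP c q) = c • (g (X 1) * g (X 2)) - Polynomial.aeval (g (X 0)) q := by
  rw [fP, map_sub, map_mul, map_mul, ← Polynomial.aeval_algHom_apply, ← MvPolynomial.algebraMap_eq,
    AlgHom.commutes, Algebra.smul_def]

theorem mkQ_fP (c : K) (q : Polynomial K) :
    mkQ c q (fP c q) = c • (gQ c q 1 * gQ c q 2) - Polynomial.aeval (gQ c q 0) q :=
  hom_fP _ _ _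

theorem u_fQ (c : K) (q : Polynomial K) : gQ c q 1 * mkQ c q (fP c q) = 0 := by
  rw [gQ, ← map_mul]
  exact Ideal.Quotient.eq_zero_iff_mem.2 (Ideal.subset_span (by simp))

theorem d_fQ (c : K) (q : Polynomial K) : gQ c q 2 * mkQ c q (fP c q) = 0 := by
  rw [gQ, ← map_mul]
  exact Ideal.Quotient.eq_zero_iff_mem.2 (Ideal.subset_span (by simp))

theorem exists_liftQ {B : Type} [CommRing B] [Algebra K B] (c : K) (q : Polynomial K) (t u d : B)
    (h1 : u * (c • (u * d) - Polynomial.aeval t q) = 0)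
    (h2 : d * (c • (u * d) - Polynomial.aeval t q) = 0) :
    ∃ f : Q c q →ₐ[K] B, f (gQ c q 0) = t ∧ f (gQ c q 1) = u ∧ f (gQ c q 2) = d := by
  let g : MvPolynomial (Fin 3) K →ₐ[K] B := aeval ![t, u, d]
  have g0 : g (X 0) = t := by simp [g]
  have g1 : g (X 1) = u := by simp [g]
  have g2 : g (X 2) = d := by simp [g]
  have gf : g (fP c q) = c • (u * d) - Polynomial.aeval t q := by
    rw [fP, map_sub, map_mul, map_mul, ← Polynomial.aeval_algHom_apply,
      ← MvPolynomial.algebraMap_eq, AlgHom.commutes, Algebra.smul_def, g0, g1, g2]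
  have hg : ∀ a ∈ (Ideal.span {X 1 * fP c q, X 2 * fP c q} : Ideal (MvPolynomial (Fin 3) K)),
      g a = 0 := by
    intro a ha
    obtain ⟨x, y, rfl⟩ := Ideal.mem_span_pair.1 ha
    simp only [map_add, map_mul, gf, g1, g2, h1, h2, mul_zero, add_zero]
  exact ⟨Ideal.Quotient.liftₐ _ g hg, g0, g1, g2⟩

theorem homQ_ext {B : Type} [CommRing B] [Algebra K B] {c : K} {q : Polynomial K}
    {f g : Q c q →ₐ[K] B} (h0 : f (gQ c q 0) = g (gQ c q 0)) (h1 : f (gQ c q 1) = g (gQ c q 1))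
    (h2 : f (gQ c q 2) = g (gQ c q 2)) : f = g := by
  have : f.comp (mkQ c q) = g.comp (mkQ c q) := by
    apply MvPolynomial.algHom_ext
    intro i
    fin_cases i
    · exact h0
    · exact h1
    · exact h2
  refine AlgHom.ext fun x => ?_
  obtain ⟨y, rfl⟩ := mkQ_surj c q x
  exact DFunLike.congr_fun this y

theorem exists_pi (c : K) (q : Polynomial K) :
    ∃ f : Q c q →ₐ[K] Polynomial K, f (gQ c q 0) = Polynomial.X ∧ f (gQ c q 1) = 0 ∧
      f (gQ c q 2) = 0 :=
  exists_liftQ c q _ _ _ (by simp) (by simp)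

theorem ann_dvd {c : K} {q : Polynomial K} (π : Q c q →ₐ[K] Polynomial K)
    (h0 : π (gQ c q 0) = Polynomial.X) (h1 : π (gQ c q 1) = 0) (h2 : π (gQ c q 2) = 0)
    (g : Q c q) (hg : g * gQ c q 1 = 0) : q ∣ π g := by
  obtain ⟨G, rfl⟩ := mkQ_surj c q g
  rw [gQ, ← map_mul] at hg
  obtain ⟨a, b, hab⟩ := Ideal.mem_span_pair.1 (Ideal.Quotient.eq_zero_iff_mem.1 hg)
  let e : MvPolynomial (Fin 3) K →ₐ[K] Polynomial (Polynomial K) :=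
    aeval ![Polynomial.C Polynomial.X, Polynomial.X, 0]
  have e0 : e (X 0) = Polynomial.C Polynomial.X := by simp [e]
  have e1 : e (X 1) = Polynomial.X := by simp [e]
  have e2 : e (X 2) = 0 := by simp [e]
  have ef : e (fP c q) = - Polynomial.C q := by
    rw [fP, map_sub, map_mul, map_mul, ← Polynomial.aeval_algHom_apply, e0, e1, e2]
    have : Polynomial.aeval (Polynomial.C (Polynomial.X : Polynomial K)) q = Polynomial.C q := by
      have := Polynomial.aeval_algebraMap_apply (Polynomial (Polynomial K)) (Polynomial.X : Polynomial K) q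
      rw [Polynomial.aeval_X_left_apply] at this
      exact this
    rw [this]; simp
  have h := congrArg e hab
  simp only [map_add, map_mul, ef, e1, e2] at h
  have h' : e G = - (e a * Polynomial.C q) := by
    apply mul_right_cancel₀ (Polynomial.X_ne_zero (R := Polynomial K))
    rw [← h]; ring
  let ev : Polynomial (Polynomial K) →ₐ[K] Polynomial K :=
    (Polynomial.aeval (R := Polynomial K) (0 : Polynomial K)).restrictScalars K
  have hev : π.comp (mkQ c q) = ev.comp e := by
    apply MvPolynomial.algHom_ext
    intro i
    fin_cases i
    · exact h0.trans (by simp [ev, e])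
    · exact h1.trans (by simp [ev, e])
    · exact h2.trans (by simp [ev, e])
  have h3 : π (mkQ c q G) = ev (e G) := DFunLike.congr_fun hev G
  rw [h3, h', map_neg, map_mul]
  have : ev (Polynomial.C q) = q := by simp [ev]
  rw [this]
  exact (dvd_mul_left _ _).neg_right

theorem f_mul {c : K} {q : Polynomial K} (π : Q c q →ₐ[K] Polynomial K)
    (h0 : π (gQ c q 0) = Polynomial.X) (h1 : π (gQ c q 1) = 0) (h2 : π (gQ c q 2) = 0)
    (g : Q c q) : mkQ c q (fP c q) * g =
      mkQ c q (fP c q) * Polynomial.aeval (gQ c q 0) (π g) := by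
  obtain ⟨G, rfl⟩ := mkQ_surj c q g
  induction G using MvPolynomial.induction_on with
  | C a =>
    rw [← MvPolynomial.algebraMap_eq, AlgHom.commutes, AlgHom.commutes, AlgHom.commutes]
  | add a b ha hb => simp only [map_add, mul_add, ha, hb]
  | mul_X p i hp =>
    have key : mkQ c q (fP c q) * gQ c q i =
        mkQ c q (fP c q) * Polynomial.aeval (gQ c q 0) (π (gQ c q i)) := by
      fin_cases i
      · change _ * gQ c q 0 = _ * Polynomial.aeval (gQ c q 0) (π (gQ c q 0))
        rw [h0, Polynomial.aeval_X]
      · change _ * gQ c q 1 = _ * Polynomial.aeval (gQ c q 0) (π (gQ c q 1))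
        rw [h1, map_zero, mul_zero, mul_comm, u_fQ]
      · change _ * gQ c q 2 = _ * Polynomial.aeval (gQ c q 0) (π (gQ c q 2))
        rw [h2, map_zero, mul_zero, mul_comm, d_fQ]
    change _ = _ * Polynomial.aeval _ (π (mkQ c q (p * X i)))
    rw [map_mul, map_mul, map_mul]
    change _ * (_ * gQ c q i) = _ * (_ * Polynomial.aeval _ (π (gQ c q i)))
    rw [← mul_assoc, hp, mul_right_comm, key, mul_right_comm, mul_assoc]

theorem f_mul_zero {c : K} {q : Polynomial K} (π : Q c q →ₐ[K] Polynomial K)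
    (h0 : π (gQ c q 0) = Polynomial.X) (h1 : π (gQ c q 1) = 0) (h2 : π (gQ c q 2) = 0)
    (g : Q c q) (hg : π g = 0) : mkQ c q (fP c q) * g = 0 := by
  rw [f_mul π h0 h1 h2, hg, map_zero, mul_zero]

/-- The dual number `a + b ε`. -/
noncomputable def dn (a b : K) : DualNumber K := TrivSqZeroExt.inl a + TrivSqZeroExt.inr b

@[simp] theorem dn_fst (a b : K) : (dn a b).fst = a := by simp [dn]
@[simp] theorem dn_snd (a b : K) : (dn a b).snd = b := by simp [dn]

theorem dual_aeval (t0 t' : K) (q : Polynomial K) :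
    Polynomial.aeval (dn t0 t') q = dn (q.eval t0) (t' * q.derivative.eval t0) := by
  have h2 : (TrivSqZeroExt.inr t' : DualNumber K) ^ 2 = 0 := by
    rw [pow_two, TrivSqZeroExt.inr_mul_inr]
  have h3 : ∀ p : Polynomial K, Polynomial.aeval (TrivSqZeroExt.inl t0 : DualNumber K) p =
      TrivSqZeroExt.inl (p.eval t0) := fun p =>
    Polynomial.aeval_algebraMap_apply (DualNumber K) t0 p
  rw [dn, Polynomial.aeval_add_of_sq_eq_zero _ _ _ h2, h3, h3]
  apply TrivSqZeroExt.ext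
  · simp
  · simp [mul_comm]

/-- Tangent vectors of `Q c q₂` at generic points of the line are tangent to the line. -/
theorem tangent {c : K} {q₁ q₂ : Polynomial K} (Θ : Q c q₁ ≃ₐ[K] Q c q₂)
    (π : Q c q₂ →ₐ[K] Polynomial K)
    (h0 : π (gQ c q₂ 0) = Polynomial.X) (h1 : π (gQ c q₂ 1) = 0) (h2 : π (gQ c q₂ 2) = 0)
    (τ : K) (hτ : q₂.eval τ ≠ 0) (h : Q c q₁ →ₐ[K] DualNumber K)
    (hh : ∀ i, (h (gQ c q₁ i)).fst = (π (Θ (gQ c q₁ i))).eval τ) :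
    ∃ a : K, ∀ x, (h x).snd = a * (π (Θ x)).derivative.eval τ := by
  let fh : DualNumber K →ₐ[K] K := TrivSqZeroExt.fstHom K K K
  have hfst : ∀ x, (h x).fst = (π (Θ x)).eval τ := by
    have : fh.comp h = ((Polynomial.aeval τ).comp π).comp (Θ : Q c q₁ →ₐ[K] Q c q₂) := by
      apply homQ_ext
      · simpa [fh] using hh 0
      · simpa [fh] using hh 1
      · simpa [fh] using hh 2
    intro x
    simpa [fh] using DFunLike.congr_fun this x
  obtain ⟨H, hH0⟩ : ∃ H : Q c q₂ →ₐ[K] DualNumber K, ∀ y, H y = h (Θ.symm y) :=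
    ⟨h.comp (Θ.symm : Q c q₂ →ₐ[K] Q c q₁), fun _ => rfl⟩
  have Hfst : ∀ y, (H y).fst = (π y).eval τ := by
    intro y
    simpa [hH0] using hfst (Θ.symm y)
  have Hd : ∀ y, H y = dn ((π y).eval τ) (H y).snd := by
    intro y
    apply TrivSqZeroExt.ext <;> simp [Hfst]
  have hF : (H (mkQ c q₂ (fP c q₂))).fst = - q₂.eval τ := by
    rw [Hfst, mkQ_fP, map_sub, map_smul, map_mul, h1, ← Polynomial.aeval_algHom_apply, h0]
    simp
  have Hz : ∀ y, π y = 0 → y * mkQ c q₂ (fP c q₂) = 0 → H y = 0 := by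
    intro y hy hy2
    have h3 := congrArg TrivSqZeroExt.snd (congrArg H hy2)
    have h4 : (H y).fst = 0 := by rw [Hfst, hy]; simp
    rw [map_mul, map_zero, TrivSqZeroExt.snd_mul, h4, hF] at h3
    apply TrivSqZeroExt.ext
    · simpa using h4
    · simpa [hτ] using h3
  have Hu := Hz _ h1 (u_fQ c q₂)
  have Hdd := Hz _ h2 (d_fQ c q₂)
  refine ⟨(H (gQ c q₂ 0)).snd, fun x => ?_⟩
  have hH : H = (Polynomial.aeval (dn τ (H (gQ c q₂ 0)).snd)).comp π := by
    apply homQ_ext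
    · rw [AlgHom.comp_apply, h0, Polynomial.aeval_X]
      have h7 := Hd (gQ c q₂ 0)
      rw [h0, Polynomial.eval_X] at h7
      exact h7
    · rw [AlgHom.comp_apply, h1, Hu, map_zero]
    · rw [AlgHom.comp_apply, h2, Hdd, map_zero]
  have h5 : h x = H (Θ x) := by simp [hH0]
  rw [h5]
  have h6 := DFunLike.congr_fun hH (Θ x)
  rw [h6, AlgHom.comp_apply, dual_aeval, dn_snd]

theorem exists_dual {c : K} {q : Polynomial K} (t0 u0 d0 t' u' d' : K)
    (h : c * (u0 * d0) = q.eval t0)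
    (h' : c * (u0 * d' + d0 * u') = t' * q.derivative.eval t0) :
    ∃ f : Q c q →ₐ[K] DualNumber K, f (gQ c q 0) = dn t0 t' ∧ f (gQ c q 1) = dn u0 u' ∧
      f (gQ c q 2) = dn d0 d' := by
  have : c • (dn u0 u' * dn d0 d') - Polynomial.aeval (dn t0 t') q = 0 := by
    rw [dual_aeval]
    apply TrivSqZeroExt.ext
    · simp [h]
    · simp [← h']; ring
  apply exists_liftQ
  · rw [this, mul_zero]
  · rw [this, mul_zero]

theorem chi_zero [CharZero K] {c : K} (hc : c ≠ 0) {q₁ q₂ : Polynomial K} (hq : q₂ ≠ 0)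
    (Θ : Q c q₁ ≃ₐ[K] Q c q₂) (π : Q c q₂ →ₐ[K] Polynomial K)
    (h0 : π (gQ c q₂ 0) = Polynomial.X) (h1 : π (gQ c q₂ 1) = 0) (h2 : π (gQ c q₂ 2) = 0) :
    π (Θ (gQ c q₁ 1)) = 0 ∧ π (Θ (gQ c q₁ 2)) = 0 := by
  have hF : π (Θ (mkQ c q₁ (fP c q₁))) = c • (π (Θ (gQ c q₁ 1)) * π (Θ (gQ c q₁ 2))) -
      Polynomial.aeval (π (Θ (gQ c q₁ 0))) q₁ := by
    rw [mkQ_fP, map_sub, map_smul, map_mul, map_sub, map_smul, map_mul,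
      ← Polynomial.aeval_algHom_apply, ← Polynomial.aeval_algHom_apply]
  have hu : π (Θ (gQ c q₁ 1)) * π (Θ (mkQ c q₁ (fP c q₁))) = 0 := by
    rw [← map_mul, ← map_mul, u_fQ, map_zero, map_zero]
  have hd : π (Θ (gQ c q₁ 2)) * π (Θ (mkQ c q₁ (fP c q₁))) = 0 := by
    rw [← map_mul, ← map_mul, d_fQ, map_zero, map_zero]
  have hpt : π (Θ (mkQ c q₁ (fP c q₁))) = 0 → ∀ τ : K,
      c * ((π (Θ (gQ c q₁ 1))).eval τ * (π (Θ (gQ c q₁ 2))).eval τ) =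
        q₁.eval ((π (Θ (gQ c q₁ 0))).eval τ) := by
    intro hz τ
    rw [hF, sub_eq_zero] at hz
    have := congrArg (Polynomial.eval τ) hz
    rw [← Polynomial.comp_eq_aeval, Polynomial.eval_comp] at this
    simpa using this
  have hne : ∀ p : Polynomial K, p ≠ 0 → ∃ τ, p.eval τ ≠ 0 ∧ q₂.eval τ ≠ 0 := by
    intro p hp
    by_contra! hcon
    refine mul_ne_zero hp hq (Polynomial.funext fun τ => ?_)
    rw [Polynomial.eval_mul, Polynomial.eval_zero]
    by_cases hpe : p.eval τ = 0
    · rw [hpe, zero_mul]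
    · rw [hcon τ hpe, mul_zero]
  constructor
  · by_contra hU
    obtain ⟨τ, hτU, hτ⟩ := hne _ hU
    have hp := hpt ((mul_eq_zero.1 hu).resolve_left hU) τ
    obtain ⟨f, f0, f1, f2⟩ := exists_dual _ _ _ 1 0
      (q₁.derivative.eval ((π (Θ (gQ c q₁ 0))).eval τ) / (c * (π (Θ (gQ c q₁ 1))).eval τ)) hp
      (by field_simp; ring)
    obtain ⟨g, g0, g1, g2⟩ := exists_dual _ _ _ 0 1
      (- (π (Θ (gQ c q₁ 2))).eval τ / (π (Θ (gQ c q₁ 1))).eval τ) hp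
      (by field_simp; ring)
    obtain ⟨a, ha⟩ := tangent Θ π h0 h1 h2 τ hτ f
      (by intro i; fin_cases i <;> simp [f0, f1, f2])
    obtain ⟨b, hb⟩ := tangent Θ π h0 h1 h2 τ hτ g
      (by intro i; fin_cases i <;> simp [g0, g1, g2])
    have a0 := ha (gQ c q₁ 0)
    have a1 := ha (gQ c q₁ 1)
    have b1 := hb (gQ c q₁ 1)
    rw [f0, dn_snd] at a0
    rw [f1, dn_snd] at a1
    rw [g1, dn_snd] at b1
    rcases mul_eq_zero.1 a1.symm with h | h
    · simp [h] at a0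
    · simp [h] at b1
  · by_contra hU
    obtain ⟨τ, hτU, hτ⟩ := hne _ hU
    have hp := hpt ((mul_eq_zero.1 hd).resolve_left hU) τ
    obtain ⟨f, f0, f1, f2⟩ := exists_dual _ _ _ 1
      (q₁.derivative.eval ((π (Θ (gQ c q₁ 0))).eval τ) / (c * (π (Θ (gQ c q₁ 2))).eval τ)) 0 hp
      (by field_simp; ring)
    obtain ⟨g, g0, g1, g2⟩ := exists_dual _ _ _ 0
      (- (π (Θ (gQ c q₁ 1))).eval τ / (π (Θ (gQ c q₁ 2))).eval τ) 1 hp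
      (by field_simp; ring)
    obtain ⟨a, ha⟩ := tangent Θ π h0 h1 h2 τ hτ f
      (by intro i; fin_cases i <;> simp [f0, f1, f2])
    obtain ⟨b, hb⟩ := tangent Θ π h0 h1 h2 τ hτ g
      (by intro i; fin_cases i <;> simp [g0, g1, g2])
    have a0 := ha (gQ c q₁ 0)
    have a1 := ha (gQ c q₁ 2)
    have b1 := hb (gQ c q₁ 2)
    rw [f0, dn_snd] at a0
    rw [f2, dn_snd] at a1
    rw [g2, dn_snd] at b1
    rcases mul_eq_zero.1 a1.symm with h | h
    · simp [h] at a0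
    · simp [h] at b1

theorem comm_main [CharZero K] {c : K} (hc : c ≠ 0) {q₁ q₂ : Polynomial K} (hq : q₂ ≠ 0)
    (Θ : Q c q₁ ≃ₐ[K] Q c q₂) :
    ∃ η a b : K, η ≠ 0 ∧ a ≠ 0 ∧
      Polynomial.C η * q₂ = q₁.comp (Polynomial.C a * Polynomial.X + Polynomial.C b) := by
  obtain ⟨π₁, p0, p1, p2⟩ := exists_pi c q₁
  obtain ⟨π, h0, h1, h2⟩ := exists_pi c q₂
  obtain ⟨hu, hd⟩ := chi_zero hc hq Θ π h0 h1 h2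
  set t := π (Θ (gQ c q₁ 0)) with ht
  have hχ : ∀ x, π (Θ x) = (π₁ x).comp t := by
    have : π.comp (Θ : Q c q₁ →ₐ[K] Q c q₂) = (Polynomial.aeval t).comp π₁ := by
      apply homQ_ext
      · simp [p0, ht]
      · simp [p1, hu]
      · simp [p2, hd]
    intro x
    have h := DFunLike.congr_fun this x
    rw [Polynomial.comp_eq_aeval]
    exact h
  have hdeg : t.natDegree = 1 := by
    have h := hχ (Θ.symm (gQ c q₂ 0))
    rw [AlgEquiv.apply_symm_apply, h0] at h
    have h3 := congrArg Polynomial.natDegree h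
    rw [Polynomial.natDegree_X, Polynomial.natDegree_comp] at h3
    exact Nat.eq_one_of_mul_eq_one_left h3.symm
  obtain ⟨a, ha, b, hab⟩ := Polynomial.natDegree_eq_one.1 hdeg
  have hinj : ∀ p : Polynomial K, p.comp t = 0 → p = 0 := by
    intro p hp
    rcases Polynomial.comp_eq_zero_iff.1 hp with h | ⟨_, h⟩
    · exact h
    · rw [h, Polynomial.natDegree_C] at hdeg
      simp at hdeg
  have hf₁ : π₁ (mkQ c q₁ (fP c q₁)) = - q₁ := by
    rw [mkQ_fP, map_sub, map_smul, map_mul, p1, ← Polynomial.aeval_algHom_apply, p0]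
    simp
  have hf₂ : π (mkQ c q₂ (fP c q₂)) = - q₂ := by
    rw [mkQ_fP, map_sub, map_smul, map_mul, h1, ← Polynomial.aeval_algHom_apply, h0]
    simp
  have d1 : q₂ ∣ q₁.comp t := by
    have h3 : Θ (mkQ c q₁ (fP c q₁)) * gQ c q₂ 1 = 0 := by
      have : mkQ c q₁ (fP c q₁) * Θ.symm (gQ c q₂ 1) = 0 := by
        apply f_mul_zero π₁ p0 p1 p2
        apply hinj
        rw [← hχ, AlgEquiv.apply_symm_apply, h1]
      have h4 := congrArg Θ this
      rwa [map_mul, AlgEquiv.apply_symm_apply, map_zero] at h4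
    have h5 := ann_dvd π h0 h1 h2 _ h3
    rw [hχ, hf₁, Polynomial.neg_comp] at h5
    exact (dvd_neg).1 h5
  have d2 : q₁.comp t ∣ q₂ := by
    have h3 : Θ.symm (mkQ c q₂ (fP c q₂)) * gQ c q₁ 1 = 0 := by
      have : mkQ c q₂ (fP c q₂) * Θ (gQ c q₁ 1) = 0 := f_mul_zero π h0 h1 h2 _ hu
      have h4 := congrArg Θ.symm this
      rwa [map_mul, AlgEquiv.symm_apply_apply, map_zero] at h4
    obtain ⟨w, hw⟩ := ann_dvd π₁ p0 p1 p2 _ h3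
    have h5 := hχ (Θ.symm (mkQ c q₂ (fP c q₂)))
    rw [AlgEquiv.apply_symm_apply, hf₂, hw, Polynomial.mul_comp] at h5
    exact (dvd_neg).1 ⟨_, h5⟩
  obtain ⟨w, hw⟩ := associated_of_dvd_dvd d1 d2
  obtain ⟨η, hη, hηw⟩ := Polynomial.isUnit_iff.1 w.isUnit
  refine ⟨η, a, b, hη.ne_zero, ha, ?_⟩
  rw [hab, hηw, ← hw, mul_comm]

end Comm
end DownUpAux
namespace DownUpAux
open DownUp

variable {K : Type} [Field K]

/-- View `φ` as a univariate polynomial. -/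
noncomputable def toP (φ : MvPolynomial (Fin 1) K) : Polynomial K :=
  aeval (fun _ => Polynomial.X) φ

theorem aeval_toP {B : Type} [CommRing B] [Algebra K B] (t : B) (φ : MvPolynomial (Fin 1) K) :
    Polynomial.aeval t (toP φ) = aeval (fun _ => t) φ := by
  have : (Polynomial.aeval t).comp (aeval (fun _ => Polynomial.X)) =
      (aeval (fun _ => t) : MvPolynomial (Fin 1) K →ₐ[K] B) := by
    apply MvPolynomial.algHom_ext
    intro i
    simp
  exact DFunLike.congr_fun this φ

theorem rel_comm {B : Type} [CommRing B] [Algebra K B] (r s : K) (u d w : B) :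
    (d * (((1 - r) * (1 - s)) • (u * d) - w) = 0 ↔
      d * d * u = (r + s) • (d * u * d) + (-(r * s)) • (u * d * d) + w * d) ∧
    (u * (((1 - r) * (1 - s)) • (u * d) - w) = 0 ↔
      d * u * u = (r + s) • (u * d * u) + (-(r * s)) • (u * u * d) + u * w) := by
  simp only [Algebra.smul_def, map_mul, map_sub, map_add, map_neg, map_one]
  refine ⟨⟨fun h => ?_, fun h => ?_⟩, ⟨fun h => ?_, fun h => ?_⟩⟩ <;> linear_combination h

theorem exists_proj (r s : K) (φ : MvPolynomial (Fin 1) K) :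
    ∃ f : A (r + s) (-(r * s)) φ →ₐ[K] Q ((1 - r) * (1 - s)) (toP φ),
      f (U _ _ φ) = gQ _ _ 1 ∧ f (D _ _ φ) = gQ _ _ 2 ∧ f (T _ _ φ (X 0)) = gQ _ _ 0 := by
  have hu := u_fQ ((1 - r) * (1 - s)) (toP φ)
  have hd := d_fQ ((1 - r) * (1 - s)) (toP φ)
  rw [mkQ_fP, aeval_toP] at hu hd
  obtain ⟨f, f1, f2, f3⟩ := exists_lift (r + s) (-(r * s)) φ
    (aeval (fun _ => gQ ((1 - r) * (1 - s)) (toP φ) 0)) (gQ _ _ 1) (gQ _ _ 2)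
    (fun p x => mul_comm _ _)
    ((rel_comm r s _ _ _).1.1 hd) ((rel_comm r s _ _ _).2.1 hu)
  exact ⟨f, f1, f2, by rw [f3]; simp⟩

theorem factor {r s : K} {φ : MvPolynomial (Fin 1) K} {B : Type} [CommRing B] [Algebra K B]
    (p : A (r + s) (-(r * s)) φ →ₐ[K] Q ((1 - r) * (1 - s)) (toP φ))
    (pU : p (U _ _ φ) = gQ _ _ 1) (pD : p (D _ _ φ) = gQ _ _ 2) (pT : p (T _ _ φ (X 0)) = gQ _ _ 0)
    (g : A (r + s) (-(r * s)) φ →ₐ[K] B) :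
    ∃ g' : Q ((1 - r) * (1 - s)) (toP φ) →ₐ[K] B, g'.comp p = g := by
  have hT : ∀ x, g (T _ _ φ x) = aeval (fun _ => g (T _ _ φ (X 0))) x := by
    have : g.comp (T _ _ φ) = aeval (fun _ => g (T _ _ φ (X 0))) := by
      apply MvPolynomial.algHom_ext
      intro i
      rw [Subsingleton.elim i 0]
      simp
    exact fun x => DFunLike.congr_fun this x
  have e1 := congrArg g (rel_ddu (r + s) (-(r * s)) φ)
  have e2 := congrArg g (rel_duu (r + s) (-(r * s)) φ)
  simp only [map_mul, map_add, map_smul] at e1 e2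
  obtain ⟨g', g0, g1, g2⟩ := exists_liftQ ((1 - r) * (1 - s)) (toP φ) (g (T _ _ φ (X 0)))
    (g (U _ _ φ)) (g (D _ _ φ))
    (by
      rw [aeval_toP, ← hT]
      exact (rel_comm r s _ _ _).2.2 e2)
    (by
      rw [aeval_toP, ← hT]
      exact (rel_comm r s _ _ _).1.2 e1)
  refine ⟨g', hom_ext ?_ ?_ ?_⟩
  · rw [AlgHom.comp_apply, pU, g1]
  · rw [AlgHom.comp_apply, pD, g2]
  · rw [AlgHom.comp_apply, pT, g0]

theorem comp_eq_id {r s : K} {φ : MvPolynomial (Fin 1) K}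
    (p : A (r + s) (-(r * s)) φ →ₐ[K] Q ((1 - r) * (1 - s)) (toP φ))
    (pU : p (U _ _ φ) = gQ _ _ 1) (pD : p (D _ _ φ) = gQ _ _ 2) (pT : p (T _ _ φ (X 0)) = gQ _ _ 0)
    (h : Q ((1 - r) * (1 - s)) (toP φ) →ₐ[K] Q ((1 - r) * (1 - s)) (toP φ))
    (hh : ∀ x, h (p x) = p x) : h = AlgHom.id K _ := by
  apply homQ_ext
  · rw [← pT, hh]; rfl
  · rw [← pU, hh]; rfl
  · rw [← pD, hh]; rfl

theorem exists_Q_equiv {r s : K} {φ₁ φ₂ : MvPolynomial (Fin 1) K}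
    (Θ : A (r + s) (-(r * s)) φ₁ ≃ₐ[K] A (r + s) (-(r * s)) φ₂) :
    Nonempty (Q ((1 - r) * (1 - s)) (toP φ₁) ≃ₐ[K] Q ((1 - r) * (1 - s)) (toP φ₂)) := by
  obtain ⟨p, pU, pD, pT⟩ := exists_proj r s φ₁
  obtain ⟨p', pU', pD', pT'⟩ := exists_proj r s φ₂
  obtain ⟨g, hg⟩ := factor p pU pD pT (p'.comp Θ.toAlgHom)
  obtain ⟨g', hg'⟩ := factor p' pU' pD' pT' (p.comp Θ.symm.toAlgHom)
  have e : ∀ x, g (p x) = p' (Θ x) := fun x => DFunLike.congr_fun hg x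
  have e' : ∀ x, g' (p' x) = p (Θ.symm x) := fun x => DFunLike.congr_fun hg' x
  exact ⟨AlgEquiv.ofAlgHom g g'
    (comp_eq_id p' pU' pD' pT' _ fun x => by simp [e', e])
    (comp_eq_id p pU pD pT _ fun x => by simp only [AlgHom.comp_apply, e', e, AlgEquiv.symm_apply_apply])⟩

/-- Affine substitution. -/
noncomputable def aff (a b : K) : MvPolynomial (Fin 1) K →ₐ[K] MvPolynomial (Fin 1) K :=
  aeval (fun _ : Fin 1 => C a * X 0 + C b)

theorem aff_X (a b : K) : aff a b (X 0) = a • X 0 + algebraMap _ _ b := by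
  simp [aff, MvPolynomial.smul_eq_C_mul, MvPolynomial.algebraMap_eq]

theorem aff_aff {a : K} (b : K) (ha : a ≠ 0) (p : MvPolynomial (Fin 1) K) :
    aff a⁻¹ (-(a⁻¹ * b)) (aff a b p) = p := by
  have : (aff a⁻¹ (-(a⁻¹ * b))).comp (aff a b) = AlgHom.id K _ := by
    apply MvPolynomial.algHom_ext
    intro i
    rw [Subsingleton.elim i 0, AlgHom.comp_apply, aff_X, map_add, map_smul, AlgHom.commutes, aff_X,
      smul_add, smul_smul, mul_inv_cancel₀ ha, one_smul, Algebra.smul_def, ← map_mul, add_assoc, ← map_add]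
    have : a * -(a⁻¹ * b) + b = 0 := by field_simp; ring
    rw [this, map_zero, add_zero]
    rfl
  exact DFunLike.congr_fun this p

theorem exists_hom (α β : K) {φ₁ φ₂ : MvPolynomial (Fin 1) K} {η a b : K}
    (h : η • φ₂ = aff a b φ₁) :
    ∃ f : A α β φ₁ →ₐ[K] A α β φ₂, f (U _ _ _) = η • U _ _ _ ∧ f (D _ _ _) = D _ _ _ ∧
      ∀ p, f (T _ _ _ p) = T _ _ _ (aff a b p) := by
  apply exists_lift α β φ₁ ((T α β φ₂).comp (aff a b)) (η • U α β φ₂) (D α β φ₂)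
  · intro p x
    exact T_comm _ _ _ _ _
  · rw [AlgHom.comp_apply, ← h, map_smul]
    simp only [smul_mul_assoc, mul_smul_comm, rel_ddu, smul_add, smul_comm η]
  · rw [AlgHom.comp_apply, ← h, map_smul]
    simp only [smul_mul_assoc, mul_smul_comm, rel_duu, smul_add, smul_comm η]

theorem backward (α β : K) {φ₁ φ₂ : MvPolynomial (Fin 1) K} {η a b : K} (hη : η ≠ 0) (ha : a ≠ 0)
    (h : η • φ₂ = aff a b φ₁) : Nonempty (A α β φ₁ ≃ₐ[K] A α β φ₂) := by
  have h' : η⁻¹ • φ₁ = aff a⁻¹ (-(a⁻¹ * b)) φ₂ := by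
    have h2 := congrArg (aff a⁻¹ (-(a⁻¹ * b))) h
    rw [aff_aff b ha, map_smul] at h2
    rw [← h2, smul_smul, inv_mul_cancel₀ hη, one_smul]
  have haff : ∀ p, aff a b (aff a⁻¹ (-(a⁻¹ * b)) p) = p := by
    intro p
    have := aff_aff (a := a⁻¹) (-(a⁻¹ * b)) (inv_ne_zero ha) p
    simpa [ha] using this
  obtain ⟨f, f1, f2, f3⟩ := exists_hom α β h
  obtain ⟨g, g1, g2, g3⟩ := exists_hom α β h'
  have e1 : f.comp g = AlgHom.id K (A α β φ₂) := by
    apply hom_ext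
    · rw [AlgHom.comp_apply, g1, map_smul, f1, smul_smul, inv_mul_cancel₀ hη, one_smul]; rfl
    · rw [AlgHom.comp_apply, g2, f2]; rfl
    · rw [AlgHom.comp_apply, g3, f3, haff]; rfl
  have e2 : g.comp f = AlgHom.id K (A α β φ₁) := by
    apply hom_ext
    · rw [AlgHom.comp_apply, f1, map_smul, g1, smul_smul, mul_inv_cancel₀ hη, one_smul]; rfl
    · rw [AlgHom.comp_apply, f2, g2]; rfl
    · rw [AlgHom.comp_apply, f3, g3, aff_aff b ha]; rfl
  exact ⟨AlgEquiv.ofAlgHom f g e1 e2⟩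

theorem toP_inv (φ : MvPolynomial (Fin 1) K) :
    Polynomial.aeval (X 0 : MvPolynomial (Fin 1) K) (toP φ) = φ := by
  rw [aeval_toP]
  have : (aeval (fun _ => X 0) : MvPolynomial (Fin 1) K →ₐ[K] _) = AlgHom.id K _ := by
    apply MvPolynomial.algHom_ext
    intro i
    rw [Subsingleton.elim i 0]
    simp
  exact DFunLike.congr_fun this φ

theorem of_comp {φ₁ φ₂ : MvPolynomial (Fin 1) K} {η a b : K}
    (h : Polynomial.C η * toP φ₂ =
      (toP φ₁).comp (Polynomial.C a * Polynomial.X + Polynomial.C b)) :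
    η • φ₂ = aff a b φ₁ := by
  have h2 := congrArg (Polynomial.aeval (X 0 : MvPolynomial (Fin 1) K)) h
  rw [map_mul, toP_inv, Polynomial.aeval_comp, aeval_toP] at h2
  rw [MvPolynomial.smul_eq_C_mul]
  simpa [aff, MvPolynomial.algebraMap_eq] using h2

theorem forward_aux [CharZero K] {r s : K} (hr1 : r ≠ 1) (hs1 : s ≠ 1)
    {φ₁ φ₂ : MvPolynomial (Fin 1) K} (h : φ₂ ≠ 0)
    (Θ : A (r + s) (-(r * s)) φ₁ ≃ₐ[K] A (r + s) (-(r * s)) φ₂) :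
    ∃ η a b : K, η ≠ 0 ∧ a ≠ 0 ∧ η • φ₂ = aff a b φ₁ := by
  obtain ⟨Ψ⟩ := exists_Q_equiv Θ
  have hq : toP φ₂ ≠ 0 := by
    intro h0
    apply h
    rw [← toP_inv φ₂, h0, map_zero]
  obtain ⟨η, a, b, hη, ha, hab⟩ := comm_main
    (mul_ne_zero (sub_ne_zero.2 hr1.symm) (sub_ne_zero.2 hs1.symm)) hq Ψ
  exact ⟨η, a, b, hη, ha, of_comp hab⟩

theorem forward [CharZero K] {r s : K} (hr1 : r ≠ 1) (hs1 : s ≠ 1)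
    {φ₁ φ₂ : MvPolynomial (Fin 1) K}
    (Θ : A (r + s) (-(r * s)) φ₁ ≃ₐ[K] A (r + s) (-(r * s)) φ₂) :
    ∃ η a b : K, η ≠ 0 ∧ a ≠ 0 ∧ η • φ₂ = aff a b φ₁ := by
  by_cases h2 : φ₂ = 0
  · by_cases h1 : φ₁ = 0
    · exact ⟨1, 1, 0, one_ne_zero, one_ne_zero, by rw [h1, h2, map_zero, smul_zero]⟩
    · obtain ⟨η, a, b, hη, ha, hab⟩ := forward_aux hr1 hs1 h1 Θ.symm
      rw [h2, map_zero] at hab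
      exact absurd ((smul_eq_zero.1 hab).resolve_left hη) h1
  · exact forward_aux hr1 hs1 h2 Θ

end DownUpAux

open DownUp MvPolynomial in
/-- Let char K = 0, r, s ∈ K* with r, s ≠ 1 and no multiplicative relations
(rⁱsʲ = 1 ⟹ i = j = 0), α = r + s, β = −rs, n = 1 (parameter t = X 0). Then
A(α,β,φ₁) ≅ A(α,β,φ₂) as K-algebras if and only if there exist η, a ∈ K* and
b ∈ K with η·φ₂(t) = φ₁(at + b). -/
theorem downUp_iso_iff {K : Type} [Field K] [CharZero K]
    (r s : K) (hr : r ≠ 0) (hs : s ≠ 0) (hr1 : r ≠ 1) (hs1 : s ≠ 1)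
    (hrs : ∀ i j : ℤ, r ^ i * s ^ j = 1 → i = 0 ∧ j = 0)
    (φ₁ φ₂ : MvPolynomial (Fin 1) K) :
    Nonempty (A (r + s) (-(r * s)) φ₁ ≃ₐ[K] A (r + s) (-(r * s)) φ₂) ↔
      ∃ η a b : K, η ≠ 0 ∧ a ≠ 0 ∧
        η • φ₂ = aeval (fun _ : Fin 1 => C a * X 0 + C b) φ₁ := by
  constructor
  · rintro ⟨Θ⟩
    exact DownUpAux.forward hr1 hs1 Θ
  · rintro ⟨η, a, b, hη, ha, h⟩
    exact DownUpAux.backward _ _ hη ha h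
end
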